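/- Let {A^k}_{k≥0} be a HOOI sequence with a block-nondegenerate limit point Ā. Then Ā is a critical point and a block-wise maximizer, and for every n, Aₙ^k(Aₙ^k)ᵀ → ĀₙĀₙᵀ in Frobenius norm as k → ∞. -/

import Mathlib

open Matrix BigOperators Filter

def froSq {ι κ : Type*} [Fintype ι] [Fintype κ] (M : Matrix ι κ ℝ) : ℝ :=
  ∑ i, ∑ j, (M i j) ^ 2

noncomputable def fro {ι κ : Type*} [Fintype ι] [Fintype κ] (M : Matrix ι κ ℝ) : ℝ :=
  Real.sqrt (froSq M)

noncomputable def eigList {m : ℕ} {κ : Type*} [Fintype κ] (Y : Matrix (Fin m) κ ℝ) : List ℝ :=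
  ((((Finset.univ : Finset (Fin m)).val.map
      (fun j => (Matrix.isHermitian_mul_conjTranspose_self Y).eigenvalues j)).sort (· ≤ ·)).reverse)

noncomputable def sval {m : ℕ} {κ : Type*} [Fintype κ] (Y : Matrix (Fin m) κ ℝ) (i : ℕ) : ℝ :=
  Real.sqrt ((eigList Y).getD (i - 1) 0)

/-- Feasibility: every factor matrix has orthonormal columns. -/
def TFeas {N : ℕ} {I r : Fin N → ℕ}
    (A : (n : Fin N) → Matrix (Fin (I n)) (Fin (r n)) ℝ) : Prop :=
  ∀ n, (A n)ᵀ * A n = 1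

/-- `Gₙ(A) = unfoldₙ(X ×₁ A₁ᵀ ⋯ ×_{n−1} A_{n−1}ᵀ ×_{n+1} A_{n+1}ᵀ ⋯ ×_N A_Nᵀ)`. -/
noncomputable def Gmat {N : ℕ} {I r : Fin N → ℕ} (X : ((n : Fin N) → Fin (I n)) → ℝ)
    (A : (n : Fin N) → Matrix (Fin (I n)) (Fin (r n)) ℝ) (n : Fin N) :
    Matrix (Fin (I n)) ((m : {m : Fin N // m ≠ n}) → Fin (r m.1)) ℝ :=
  fun j c => ∑ idx : ((m : {m : Fin N // m ≠ n}) → Fin (I m.1)),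
    X (fun i => if h : i = n then Fin.cast (by rw [h]) j else idx ⟨i, h⟩) *
      ∏ m : {m : Fin N // m ≠ n}, A m.1 (idx m) (c m)

/-- `f(A) = ‖X ×₁ A₁ᵀ ⋯ ×_N A_Nᵀ‖_F²`. -/
noncomputable def fval {N : ℕ} {I r : Fin N → ℕ} (X : ((n : Fin N) → Fin (I n)) → ℝ)
    (A : (n : Fin N) → Matrix (Fin (I n)) (Fin (r n)) ℝ) : ℝ :=
  ∑ c : ((n : Fin N) → Fin (r n)),
    (∑ idx : ((n : Fin N) → Fin (I n)), X idx * ∏ n, A n (idx n) (c n)) ^ 2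

/-- A critical point: `Gₙ(A)Gₙ(A)ᵀAₙ = AₙAₙᵀGₙ(A)Gₙ(A)ᵀAₙ` for all `n`. -/
def Critical {N : ℕ} {I r : Fin N → ℕ} (X : ((n : Fin N) → Fin (I n)) → ℝ)
    (A : (n : Fin N) → Matrix (Fin (I n)) (Fin (r n)) ℝ) : Prop :=
  ∀ n, Gmat X A n * (Gmat X A n)ᵀ * A n =
    A n * (A n)ᵀ * (Gmat X A n * (Gmat X A n)ᵀ * A n)

/-- A block-wise maximizer. -/
def BlockMax {N : ℕ} {I r : Fin N → ℕ} (X : ((n : Fin N) → Fin (I n)) → ℝ)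
    (A : (n : Fin N) → Matrix (Fin (I n)) (Fin (r n)) ℝ) : Prop :=
  ∀ n, ∀ B : Matrix (Fin (I n)) (Fin (r n)) ℝ, Bᵀ * B = 1 →
    froSq (Bᵀ * Gmat X A n) ≤ froSq ((A n)ᵀ * Gmat X A n)

/-- Block-nondegeneracy: `σ_{rₙ}(Gₙ(A)) > σ_{rₙ+1}(Gₙ(A))` for all `n`. -/
def NonDeg {N : ℕ} {I r : Fin N → ℕ} (X : ((n : Fin N) → Fin (I n)) → ℝ)
    (A : (n : Fin N) → Matrix (Fin (I n)) (Fin (r n)) ℝ) : Prop :=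
  ∀ n, sval (Gmat X A n) (r n + 1) < sval (Gmat X A n) (r n)

/-- The hybrid tuple used in HOOI: the already-updated blocks `i < n` come from
`Anew`, the rest from `Aold`. -/
def hyb {N : ℕ} {I r : Fin N → ℕ}
    (Aold Anew : (n : Fin N) → Matrix (Fin (I n)) (Fin (r n)) ℝ) (n : Fin N) :
    (i : Fin N) → Matrix (Fin (I i)) (Fin (r i)) ℝ :=
  fun i => if i < n then Anew i else Aold i

/-- `Gₙ^k = unfoldₙ(X ×₁ (A₁^{k+1})ᵀ ⋯ ×_{n−1} (A_{n−1}^{k+1})ᵀ ×_{n+1} (A_{n+1}^k)ᵀ ⋯ ×_N (A_N^k)ᵀ)`. -/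
noncomputable def Gseq {N : ℕ} {I r : Fin N → ℕ} (X : ((n : Fin N) → Fin (I n)) → ℝ)
    (A : ℕ → (n : Fin N) → Matrix (Fin (I n)) (Fin (r n)) ℝ) (k : ℕ) (n : Fin N) :
    Matrix (Fin (I n)) ((m : {m : Fin N // m ≠ n}) → Fin (r m.1)) ℝ :=
  Gmat X (hyb (A k) (A (k + 1)) n) n

/-- A HOOI sequence. -/
def IsHOOI {N : ℕ} {I r : Fin N → ℕ} (X : ((n : Fin N) → Fin (I n)) → ℝ)
    (A : ℕ → (n : Fin N) → Matrix (Fin (I n)) (Fin (r n)) ℝ) : Prop :=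
  (∀ k, TFeas (A k)) ∧
  ∀ k (n : Fin N), ∀ B : Matrix (Fin (I n)) (Fin (r n)) ℝ, Bᵀ * B = 1 →
    froSq (Bᵀ * Gseq X A k n) ≤ froSq ((A (k + 1) n)ᵀ * Gseq X A k n)

/-- A greedy HOOI sequence. -/
def IsGreedyHOOI {N : ℕ} {I r : Fin N → ℕ} (X : ((n : Fin N) → Fin (I n)) → ℝ)
    (A : ℕ → (n : Fin N) → Matrix (Fin (I n)) (Fin (r n)) ℝ) : Prop :=
  IsHOOI X A ∧
  ∀ k (n : Fin N), ∀ B : Matrix (Fin (I n)) (Fin (r n)) ℝ, Bᵀ * B = 1 →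
    (∀ C : Matrix (Fin (I n)) (Fin (r n)) ℝ, Cᵀ * C = 1 →
      froSq (Cᵀ * Gseq X A k n) ≤ froSq (Bᵀ * Gseq X A k n)) →
    fro (A (k + 1) n - A k n) ≤ fro (B - A k n)

/-- `Ā` is a limit point of the sequence `{A^k}` (blockwise in Frobenius norm). -/
def IsLimitPt {N : ℕ} {I r : Fin N → ℕ}
    (A : ℕ → (n : Fin N) → Matrix (Fin (I n)) (Fin (r n)) ℝ)
    (Abar : (n : Fin N) → Matrix (Fin (I n)) (Fin (r n)) ℝ) : Prop :=
  ∃ φ : ℕ → ℕ, StrictMono φ ∧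
    ∀ n, Tendsto (fun k => fro (A (φ k) n - Abar n)) atTop (nhds 0)

/-- `‖A − B‖_F = √(∑ₙ ‖Aₙ − Bₙ‖_F²)` on tuples. -/
noncomputable def tdist {N : ℕ} {I r : Fin N → ℕ}
    (A B : (n : Fin N) → Matrix (Fin (I n)) (Fin (r n)) ℝ) : ℝ :=
  Real.sqrt (∑ n, froSq (A n - B n))

/-- A local maximizer of `f` over the feasible set. -/
def LocalMax {N : ℕ} {I r : Fin N → ℕ} (X : ((n : Fin N) → Fin (I n)) → ℝ)
    (A : (n : Fin N) → Matrix (Fin (I n)) (Fin (r n)) ℝ) : Prop :=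
  TFeas A ∧ ∃ ε > (0 : ℝ), ∀ B : (n : Fin N) → Matrix (Fin (I n)) (Fin (r n)) ℝ,
    TFeas B → tdist B A ≤ ε → fval X B ≤ fval X A

/-- A globally optimal solution. -/
def GlobalMax {N : ℕ} {I r : Fin N → ℕ} (X : ((n : Fin N) → Fin (I n)) → ℝ)
    (A : (n : Fin N) → Matrix (Fin (I n)) (Fin (r n)) ℝ) : Prop :=
  TFeas A ∧ ∀ B : (n : Fin N) → Matrix (Fin (I n)) (Fin (r n)) ℝ,
    TFeas B → fval X B ≤ fval X A

/-! HOOI is block coordinate ascent: with `Pₙ = AₙAₙᵀ` the objective is the multilinear form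
`F(P) = ⟨X, X ×₁ P₁ ⋯ ×_N P_N⟩` on tuples of orthogonal projections, and `Q ↦ F(P₁, …, Q, …, P_N)`
is the linear functional `tr (Q · GₙGₙᵀ)`. A spectral gap of `GₙGₙᵀ` makes this functional drop
quadratically in the distance from its unique maximizer, the top eigenprojection. Near a
nondegenerate limit point every sweep therefore increases `F` by at least a multiple of its squared
step length, and a block update depends continuously on the other blocks, so the limit point is
fixed by it.

Convergence of the whole sequence then follows from a Łojasiewicz inequality `|F - c|^θ ≤ C‖∇F‖` by
the usual finite-length argument. Since `F` only varies over projections, the inequality is applied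
to `F ∘ ψ` with `ψ(M) = 3M² - 2M³`: this map fixes projections, and its derivative there removes the
normal part of the gradient. As `F ∘ ψ` is a polynomial, the inequality has an algebraic proof: in a
discrete valuation ring of residue characteristic zero a nonunit `p ≠ 0` does not divide all of its
partial derivatives. Every prime containing `p` of a finitely generated domain is dominated by such
a ring, so `p` divides a power of `y` as soon as it divides all `y * ∂ⱼp`. With `y` the quotient of
`p` by its largest partial derivative, the cofactor is bounded, and the inequality is what
remains. -/

section DiscreteValuationRing

open IsLocalRing Polynomial

variable {k : Type*} [Field k] {V : Type*} [CommRing V]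

lemma formallySmooth_of_charZero [CharZero k] (κ : Type*) [Field κ] [Algebra k κ] :
    Algebra.FormallySmooth k κ := by
  obtain ⟨s, hs⟩ := exists_isTranscendenceBasis k κ
  have := hs.isAlgebraic_field
  have : CharZero κ := charZero_of_injective_algebraMap (algebraMap k κ).injective
  exact .of_algebraicIndependent_of_isSeparable hs.1

lemma exists_residueField_section [CharZero k] [IsLocalRing V] [Algebra k V] (n : ℕ) :
    ∃ s : ResidueField V →ₐ[k] V ⧸ maximalIdeal V ^ (n + 1),
      ∀ c v, Ideal.Quotient.mk _ v = s c → residue V v = c := by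
  have hle : maximalIdeal V ^ (n + 1) ≤ maximalIdeal V := Ideal.pow_le_self n.succ_ne_zero
  let g : V ⧸ maximalIdeal V ^ (n + 1) →ₐ[k] ResidueField V := Ideal.Quotient.factorₐ k hle
  have hg : Function.Surjective g := Ideal.Quotient.factor_surjective hle
  have hker : RingHom.ker (Ideal.Quotient.factor hle) ^ (n + 1) = ⊥ := by
    rw [Ideal.Quotient.factor_ker, ← Ideal.map_pow, Ideal.map_quotient_self]
  have := formallySmooth_of_charZero (k := k) (ResidueField V)
  exact ⟨Algebra.FormallySmooth.liftOfSurjective (AlgHom.id k _) g hg ⟨_, hker⟩, fun c v hv =>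
    (congrArg g hv).trans (Algebra.FormallySmooth.liftOfSurjective_apply _ g hg _ c)⟩

lemma exists_polynomial_algHom_quotient [CharZero k] [IsLocalRing V] [Algebra k V] {t : V}
    (ht : t ∈ maximalIdeal V) (n : ℕ) :
    ∃ π : (ResidueField V)[X] →ₐ[k] V ⧸ maximalIdeal V ^ (n + 1),
      π X = Ideal.Quotient.mk _ t ∧
        ∀ q v, Ideal.Quotient.mk _ v = π q → residue V v = q.coeff 0 := by
  obtain ⟨s, hs⟩ := exists_residueField_section (k := k) (V := V) n
  let π : (ResidueField V)[X] →ₐ[k] V ⧸ maximalIdeal V ^ (n + 1) :=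
    eval₂AlgHom s (Ideal.Quotient.mk _ t) fun _ => Commute.all _ _
  have hπX : π X = Ideal.Quotient.mk _ t := eval₂_X _ _
  have hπC (c) : π (C c) = s c := eval₂_C _ _
  refine ⟨π, hπX, fun q v hv => ?_⟩
  obtain ⟨b, hb⟩ := Ideal.Quotient.mk_surjective (π q.divX)
  have h := hs (q.coeff 0) (v - t * b) (by
    rw [map_sub, map_mul, hb, hv, ← hπX, ← map_mul, ← map_sub, ← hπC,
      sub_eq_of_eq_add' (X_mul_divX_add q).symm])
  rwa [map_sub, map_mul, (residue_eq_zero_iff t).mpr ht, zero_mul, sub_zero] at h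

variable [IsDomain V] [IsDiscreteValuationRing V]

lemma quotient_mk_maximalIdeal_pow_eq_zero_iff {t : V} (ht : Irreducible t) {n : ℕ} {v : V} :
    Ideal.Quotient.mk (maximalIdeal V ^ n) v = 0 ↔ t ^ n ∣ v := by
  rw [Ideal.Quotient.eq_zero_iff_mem, ht.maximalIdeal_eq, Ideal.span_singleton_pow,
    Ideal.mem_span_singleton]

lemma residue_eq_zero_iff_dvd {t : V} (ht : Irreducible t) {v : V} : residue V v = 0 ↔ t ∣ v := by
  rw [residue_eq_zero_iff, ht.maximalIdeal_eq, Ideal.mem_span_singleton]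

variable [Algebra k V] {t : V} {n : ℕ} {π : (ResidueField V)[X] →ₐ[k] V ⧸ maximalIdeal V ^ n}

lemma surjective_of_residue_eq_coeff_zero (ht : Irreducible t) (hπX : π X = Ideal.Quotient.mk _ t)
    (hπ : ∀ q v, Ideal.Quotient.mk _ v = π q → residue V v = q.coeff 0) :
    Function.Surjective π := by
  let mk := Ideal.Quotient.mk (maximalIdeal V ^ n)
  have approx (m : ℕ) (v : V) : ∃ q w, mk v = π q + mk (t ^ m * w) := by
    induction m with
    | zero => exact ⟨0, v, by simp⟩
    | succ m ih =>
      obtain ⟨q, w, hq⟩ := ih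
      obtain ⟨w', hw'⟩ := Ideal.Quotient.mk_surjective (π (C (residue V w)))
      obtain ⟨x, hx⟩ := (residue_eq_zero_iff_dvd ht).mp
        (show residue V (w - w') = 0 by rw [map_sub, hπ _ _ hw', coeff_C_zero, sub_self])
      refine ⟨q + X ^ m * C (residue V w), x, ?_⟩
      rw [hq, map_add π, map_mul π, map_pow π, hπX, ← hw', eq_add_of_sub_eq' hx]
      simp only [mk, map_mul, map_add, map_pow]
      ring
  intro a
  obtain ⟨v, rfl⟩ := Ideal.Quotient.mk_surjective a
  obtain ⟨q, w, hq⟩ := approx n v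
  refine ⟨q, ?_⟩
  rw [hq, (quotient_mk_maximalIdeal_pow_eq_zero_iff ht).mpr (dvd_mul_right _ w), add_zero]

lemma X_pow_dvd_of_residue_eq_coeff_zero (ht : Irreducible t) (hπX : π X = Ideal.Quotient.mk _ t)
    (hπ : ∀ q v, Ideal.Quotient.mk _ v = π q → residue V v = q.coeff 0)
    {q : (ResidueField V)[X]} (hq : π q = 0) : X ^ n ∣ q := by
  rcases eq_or_ne q 0 with rfl | hq0
  · exact dvd_zero _
  obtain ⟨w, hqw, hw⟩ := exists_eq_pow_rootMultiplicity_mul_and_not_dvd q hq0 0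
  rw [C_0, sub_zero] at hqw hw
  obtain ⟨v, hv⟩ := Ideal.Quotient.mk_surjective (π w)
  have hv_unit : IsUnit v := by
    rw [X_dvd_iff, ← hπ w v hv] at hw
    exact (residue_ne_zero_iff_isUnit v).mp hw
  have h0 : Ideal.Quotient.mk (maximalIdeal V ^ n) (t ^ q.rootMultiplicity 0 * v) = 0 := by
    rw [map_mul, hv, map_pow, ← hπX, ← map_pow, ← map_mul, ← hqw, hq]
  rw [quotient_mk_maximalIdeal_pow_eq_zero_iff ht, hv_unit.dvd_mul_right,
    pow_dvd_pow_iff ht.ne_zero ht.not_isUnit] at h0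
  exact hqw ▸ (pow_dvd_pow X h0).mul_right w

lemma X_pow_dvd_iff_pow_dvd (ht : Irreducible t) (hπX : π X = Ideal.Quotient.mk _ t)
    (hπ : ∀ q v, Ideal.Quotient.mk _ v = π q → residue V v = q.coeff 0) {m : ℕ} (hm : m ≤ n)
    {q : (ResidueField V)[X]} {v : V} (hq : π q = Ideal.Quotient.mk _ v) :
    X ^ m ∣ q ↔ t ^ m ∣ v := by
  constructor
  · rintro ⟨b, rfl⟩
    obtain ⟨c, hc⟩ := Ideal.Quotient.mk_surjective (π b)
    rw [map_mul, map_pow, hπX, ← hc, ← map_pow, ← map_mul, eq_comm, ← sub_eq_zero, ← map_sub,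
      quotient_mk_maximalIdeal_pow_eq_zero_iff ht] at hq
    exact (dvd_sub_left (dvd_mul_right _ c)).mp ((pow_dvd_pow t hm).trans hq)
  · rintro ⟨c, rfl⟩
    obtain ⟨b, hb⟩ := surjective_of_residue_eq_coeff_zero ht hπX hπ (Ideal.Quotient.mk _ c)
    have hzero : π (q - X ^ m * b) = 0 := by
      rw [map_sub, map_mul, map_pow, hπX, hb, hq, map_mul, map_pow, sub_self]
    exact (dvd_sub_left (dvd_mul_right _ b)).mp
      ((pow_dvd_pow X hm).trans (X_pow_dvd_of_residue_eq_coeff_zero ht hπX hπ hzero))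

end DiscreteValuationRing

section Derivatives

open IsLocalRing

lemma derivation_aeval {R A M σ : Type*} [CommSemiring R] [CommSemiring A] [AddCommMonoid M]
    [Algebra R A] [Module A M] [Module R M] [Fintype σ] (D : Derivation R A M) (f : σ → A)
    (p : MvPolynomial σ R) :
    D (MvPolynomial.aeval f p) =
      ∑ j, MvPolynomial.aeval f (MvPolynomial.pderiv j p) • D (f j) := by
  classical
  induction p using MvPolynomial.induction_on with
  | C a => simp
  | add p q hp hq => simp only [map_add, hp, hq, add_smul, Finset.sum_add_distrib]
  | mul_X p i hp =>
    simp only [map_mul, MvPolynomial.aeval_X, Derivation.leibniz, hp, MvPolynomial.pderiv_X,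
      map_add, smul_eq_mul, add_smul, Finset.sum_add_distrib, Finset.smul_sum, smul_smul]
    simp [Pi.single_apply, apply_ite]

lemma exists_aeval_eq_of_surjective {R A B σ : Type*} [CommSemiring R] [CommSemiring A]
    [CommSemiring B] [Algebra R A] [Algebra R B] {f : A →ₐ[R] B} (hf : Function.Surjective f)
    (g : MvPolynomial σ R →ₐ[R] B) :
    ∃ y : σ → A, ∀ q, f (MvPolynomial.aeval y q) = g q := by
  choose y hy using fun j => hf (g (MvPolynomial.X j))
  have hcomp : f.comp (MvPolynomial.aeval y) = g := MvPolynomial.algHom_ext fun j => by simp [hy]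
  exact ⟨y, DFunLike.congr_fun hcomp⟩

lemma X_pow_dvd_of_X_pow_dvd_derivative {K : Type*} [Field K] [CharZero K] {q : Polynomial K}
    {n : ℕ} (h0 : q.coeff 0 = 0) (h : Polynomial.X ^ n ∣ Polynomial.derivative q) :
    Polynomial.X ^ (n + 1) ∣ q := by
  rw [Polynomial.X_pow_dvd_iff] at h ⊢
  rintro (_ | d) hd
  · exact h0
  · have := h d (Nat.lt_of_succ_lt_succ hd)
    rw [Polynomial.coeff_derivative, mul_eq_zero] at this
    exact this.resolve_right d.cast_add_one_ne_zero

variable {k : Type*} [Field k] [CharZero k] {V : Type*} [CommRing V] [IsDomain V]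
  [IsDiscreteValuationRing V] [Algebra k V] {σ : Type*} [Finite σ]

-- Modulo `t ^ (e + 1)`, with `e` the order of `τ p`, the ring `V` is a truncated polynomial ring
-- over its residue field, where differentiation lowers the order of vanishing.
lemma isUnit_of_dvd_pderiv (τ : MvPolynomial σ k →ₐ[k] V) {p : MvPolynomial σ k} (hp : τ p ≠ 0)
    (hdvd : ∀ j, τ p ∣ τ (MvPolynomial.pderiv j p)) : IsUnit (τ p) := by
  have := Fintype.ofFinite σ
  obtain ⟨t, ht⟩ := IsDiscreteValuationRing.exists_irreducible V
  obtain ⟨e, hassoc⟩ := IsDiscreteValuationRing.associated_pow_irreducible hp ht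
  by_contra hunit
  have : CharZero (ResidueField V) :=
    charZero_of_injective_algebraMap (algebraMap k (ResidueField V)).injective
  have htm : t ∈ maximalIdeal V := (mem_maximalIdeal t).mpr ht.not_isUnit
  obtain ⟨π, hπX, hπ⟩ := exists_polynomial_algHom_quotient (k := k) htm e
  obtain ⟨y, hy⟩ := exists_aeval_eq_of_surjective
    (surjective_of_residue_eq_coeff_zero ht hπX hπ) ((Ideal.Quotient.mkₐ k _).comp τ)
  have hX {m : ℕ} (hm : m ≤ e + 1) (q : MvPolynomial σ k) :
      Polynomial.X ^ m ∣ MvPolynomial.aeval y q ↔ t ^ m ∣ τ q :=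
    X_pow_dvd_iff_pow_dvd ht hπX hπ hm (hy q)
  have hp0 : (MvPolynomial.aeval y p).coeff 0 = 0 := by
    rw [← hπ _ (τ p) (hy p).symm]
    exact (residue_eq_zero_iff _).mpr ((mem_maximalIdeal _).mpr hunit)
  have hderiv : Polynomial.X ^ e ∣ Polynomial.derivative (MvPolynomial.aeval y p) := by
    rw [show Polynomial.derivative (MvPolynomial.aeval y p) = _ from
      derivation_aeval (Polynomial.derivative'.restrictScalars k) y p]
    exact Finset.dvd_sum fun j _ =>
      ((hX e.le_succ _).mpr (hassoc.symm.dvd.trans (hdvd j))).mul_right _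
  have hpow : t ^ (e + 1) ∣ t ^ e :=
    ((hX le_rfl p).mp (X_pow_dvd_of_X_pow_dvd_derivative hp0 hderiv)).trans hassoc.dvd
  exact e.not_succ_le_self ((pow_dvd_pow_iff ht.ne_zero ht.not_isUnit).mp hpow)

end Derivatives

section Dominating

open IsLocalRing

variable {k : Type*} [Field k]

lemma isDiscreteValuationRing_localization_of_mem_minimalPrimes {C : Type*} [CommRing C]
    [IsDomain C] [IsNoetherianRing C] [IsIntegrallyClosed C] {c : C} (hc : c ≠ 0) {q : Ideal C}
    [q.IsPrime] (hq : q ∈ (Ideal.span {c}).minimalPrimes) :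
    IsDiscreteValuationRing (Localization.AtPrime q) := by
  let V := Localization.AtPrime q
  have hle : q.primeCompl ≤ nonZeroDivisors C := q.primeCompl_le_nonZeroDivisors
  have : IsNoetherianRing V := IsLocalization.isNoetherianRing q.primeCompl V inferInstance
  have : IsIntegrallyClosed V := isIntegrallyClosed_of_isLocalization V q.primeCompl hle
  have hmax : maximalIdeal V ≠ ⊥ := by
    intro h
    have hcV : algebraMap C V c ∈ maximalIdeal V :=
      (IsLocalization.AtPrime.to_map_mem_maximal_iff V q _).mpr
        (hq.1.2 (Ideal.mem_span_singleton_self c))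
    rw [h, Ideal.mem_bot, IsLocalization.to_map_eq_zero_iff V hle] at hcV
    exact hc hcV
  have hdim : Ring.KrullDimLE 1 V := by
    rw [Ring.krullDimLE_iff, IsLocalization.AtPrime.ringKrullDim_eq_height q V]
    exact_mod_cast Ideal.height_le_one_of_isPrincipal_of_mem_minimalPrimes _ q hq
  have hprime := Ring.krullDimLE_one_iff_of_noZeroDivisors.mp hdim
  have hfield : ¬ IsField V := fun h => hmax (isField_iff_maximalIdeal_eq.mp h)
  have htfae := (IsDiscreteValuationRing.TFAE V hfield).out 0 3
  exact htfae.mpr ⟨inferInstance, maximalIdeal V, ⟨hmax, inferInstance⟩,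
    fun P hP => eq_maximalIdeal (hprime P hP.1 hP.2)⟩

variable [CharZero k]

lemma isNoetherianRing_integralClosure_fractionRing {B : Type*} [CommRing B] [IsDomain B]
    [Algebra k B] [Algebra.FiniteType k B] :
    IsNoetherianRing (integralClosure B (FractionRing B)) := by
  obtain ⟨s, g, ginj, gfin⟩ := exists_finite_inj_algHom_of_fg k B
  let A := MvPolynomial (Fin s) k
  let K := FractionRing A
  let L := FractionRing B
  let : Algebra A B := g.toRingHom.toAlgebra
  have : Module.Finite A B := gfin
  have : FaithfulSMul A B := (faithfulSMul_iff_algebraMap_injective A B).mpr ginj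
  have : FaithfulSMul A L := (faithfulSMul_iff_algebraMap_injective A L).mpr <| by
    rw [IsScalarTower.algebraMap_eq A B L]
    exact (IsFractionRing.injective B L).comp ginj
  let : Algebra K L := FractionRing.liftAlgebra A L
  have : IsScalarTower A K L := FractionRing.isScalarTower_liftAlgebra A L
  have : FiniteDimensional K L := Module.Finite.of_isLocalization A B (nonZeroDivisors A)
  have : CharZero K := charZero_of_injective_algebraMap (algebraMap k K).injective
  have : IsNoetherianRing (integralClosure A L) := integralClosure.isNoetherianRing (K := K) L
  let : Algebra B (integralClosure A L) :=
    ((IsScalarTower.toAlgHom A B L).codRestrict _ fun b =>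
      (Algebra.IsIntegral.isIntegral (R := A) b).map
        (IsScalarTower.toAlgHom A B L)).toRingHom.toAlgebra
  have : IsScalarTower A B (integralClosure A L) := .of_algebraMap_eq fun _ => rfl
  have : IsScalarTower B (integralClosure A L) L := .of_algebraMap_eq fun _ => rfl
  have : IsIntegralClosure (integralClosure A L) B L := IsIntegralClosure.tower_top (R := A)
  exact isNoetherianRing_of_ringEquiv _
    (IsIntegralClosure.equiv B (integralClosure A L) L (integralClosure B L)).toRingEquiv

universe u

lemma exists_discreteValuationRing_algHom {B : Type u} [CommRing B] [IsDomain B] [Algebra k B]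
    [Algebra.FiniteType k B] {P : Ideal B} [P.IsPrime] {b : B} (hb : b ∈ P) (hb0 : b ≠ 0) :
    ∃ (V : Type u) (_ : CommRing V) (_ : IsDomain V) (_ : IsDiscreteValuationRing V)
      (_ : Algebra k V) (φ : B →ₐ[k] V),
      Function.Injective φ ∧ ¬ IsUnit (φ b) ∧ ∀ y ∉ P, IsUnit (φ y) := by
  let C := integralClosure B (FractionRing B)
  have : IsNoetherianRing C := isNoetherianRing_integralClosure_fractionRing (k := k)
  have : IsIntegrallyClosed C :=
    integralClosure.isIntegrallyClosedOfFiniteExtension (FractionRing B)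
  have hBC : Function.Injective (algebraMap B C) := FaithfulSMul.algebraMap_injective B C
  obtain ⟨Q, -, hQ, hQP⟩ := Ideal.exists_ideal_over_prime_of_isIntegral P (⊥ : Ideal C)
    fun x hx => by
      rw [Ideal.mem_comap, Ideal.mem_bot, map_eq_zero_iff _ hBC] at hx
      exact hx ▸ P.zero_mem
  obtain ⟨q, hq, hqQ⟩ := Ideal.exists_minimalPrimes_le (I := Ideal.span {algebraMap B C b})
    (J := Q) <| by
      rw [Ideal.span_singleton_le_iff_mem, ← Ideal.mem_comap, hQP]
      exact hb
  have : q.IsPrime := hq.1.1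
  have hdvr := isDiscreteValuationRing_localization_of_mem_minimalPrimes
    ((map_ne_zero_iff _ hBC).mpr hb0) hq
  let φ : B →ₐ[k] Localization.AtPrime q :=
    (IsScalarTower.toAlgHom k C _).comp (IsScalarTower.toAlgHom k B C)
  have hφ : Function.Injective φ :=
    (IsLocalization.injective (Localization.AtPrime q) q.primeCompl_le_nonZeroDivisors).comp hBC
  have isUnit_iff (y : B) :
      IsUnit (φ y) ↔ algebraMap B C y ∉ q :=
    IsLocalization.AtPrime.isUnit_to_map_iff _ q _
  refine ⟨Localization.AtPrime q, inferInstance, inferInstance, hdvr, inferInstance, φ, hφ, ?_,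
    fun y hy => ?_⟩
  · exact (isUnit_iff b).not.mpr (not_not.mpr (hq.1.2 (Ideal.mem_span_singleton_self _)))
  · exact (isUnit_iff y).mpr fun h => hy (hQP ▸ Ideal.mem_comap.mpr (hqQ h))

lemma exists_dvd_pow_of_dvd_mul_pderiv {σ : Type*} [Finite σ] {B : Type*} [CommRing B] [IsDomain B]
    [Algebra k B] [Algebra.FiniteType k B] (τ : MvPolynomial σ k →ₐ[k] B) {p : MvPolynomial σ k}
    (hp : τ p ≠ 0) {y : B} (hy : ∀ j, τ p ∣ y * τ (MvPolynomial.pderiv j p)) :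
    ∃ N : ℕ, τ p ∣ y ^ N := by
  suffices y ∈ (Ideal.span {τ p}).radical by
    obtain ⟨N, hN⟩ := this
    exact ⟨N, Ideal.mem_span_singleton.mp hN⟩
  rw [Ideal.radical_eq_sInf, Ideal.mem_sInf]
  rintro P ⟨hpP, hP⟩
  by_contra hyP
  obtain ⟨V, _, _, _, _, φ, hφ, hunit, hφy⟩ := exists_discreteValuationRing_algHom (k := k)
    ((Ideal.span_singleton_le_iff_mem P).mp hpP) hp
  refine hunit (isUnit_of_dvd_pderiv (φ.comp τ) ((map_ne_zero_iff φ hφ).mpr hp) fun j => ?_)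
  have h := map_dvd φ (hy j)
  rw [map_mul] at h
  exact ((hφy y hyP).dvd_mul_left).mp h

end Dominating

section Lojasiewicz

open MvPolynomial Topology

variable {σ : Type*}

lemma exists_algHom_localizationAway_eq_eval {d : MvPolynomial σ ℝ} {x : σ → ℝ}
    (hd : eval x d ≠ 0) :
    ∃ E : Localization.Away d →ₐ[ℝ] ℝ, (∀ q, E (algebraMap _ _ q) = eval x q) ∧
      ∀ q, E (algebraMap _ _ q * IsLocalization.Away.invSelf d) = eval x q / eval x d := by
  have hunit : IsUnit ((aeval x).toRingHom d) := isUnit_iff_ne_zero.mpr hd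
  let E : Localization.Away d →ₐ[ℝ] ℝ := IsLocalization.Away.liftAlgHom (f := aeval x) d hunit
  have hE (q) : E (algebraMap _ _ q) = eval x q := IsLocalization.Away.lift_eq d hunit q
  refine ⟨E, hE, fun q => ?_⟩
  rw [eq_div_iff hd, ← hE d, ← map_mul, mul_assoc, mul_comm (IsLocalization.Away.invSelf d),
    IsLocalization.Away.mul_invSelf, mul_one, hE]

lemma exists_mem_adjoin_pow_mul_eq [Finite σ] {k : Type*} [Field k] [CharZero k] {K : Type*}
    [CommRing K] [IsDomain K] [Algebra k K] (τ : MvPolynomial σ k →ₐ[k] K) {p : MvPolynomial σ k}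
    (hp : τ p ≠ 0) {z : K} {w : σ → K} (hzw : ∀ j, z * τ (pderiv j p) = τ p * w j) :
    ∃ N : ℕ, ∃ b ∈ Algebra.adjoin k (Set.range (τ ∘ X) ∪ (insert z (Set.range w))),
      z ^ N = τ p * b := by
  let S := Set.range (τ ∘ X) ∪ insert z (Set.range w)
  have hS : S.Finite := (Set.finite_range _).union ((Set.finite_range w).insert z)
  have : Algebra.FiniteType k (Algebra.adjoin k S) :=
    (Subalgebra.fg_iff_finiteType _).mp ((Subalgebra.fg_def).mpr ⟨S, hS, rfl⟩)
  have hτ (q) : τ q ∈ Algebra.adjoin k S := by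
    have hmem : τ q ∈ (aeval (R := k) (τ ∘ X)).range := ⟨q, congrArg (· q) (aeval_unique τ).symm⟩
    rw [← Algebra.adjoin_range_eq_range_aeval] at hmem
    exact Algebra.adjoin_mono Set.subset_union_left hmem
  have hz : z ∈ Algebra.adjoin k S := Algebra.subset_adjoin (.inr (.inl rfl))
  have hw (j) : w j ∈ Algebra.adjoin k S := Algebra.subset_adjoin (.inr (.inr ⟨j, rfl⟩))
  obtain ⟨N, b, hb⟩ := exists_dvd_pow_of_dvd_mul_pderiv (τ.codRestrict _ hτ) (p := p)
    (y := ⟨z, hz⟩) (fun h => hp (congrArg Subtype.val h))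
    fun j => ⟨⟨w j, hw j⟩, Subtype.ext (hzw j)⟩
  exact ⟨N, b, b.2, congrArg Subtype.val hb⟩

lemma exists_abs_le_of_mem_adjoin {K ι : Type*} [CommRing K] [Algebra ℝ K] {E : ι → K →ₐ[ℝ] ℝ}
    {S : Set K} (hS : ∀ s ∈ S, ∃ M, ∀ i, |E i s| ≤ M) {b : K} (hb : b ∈ Algebra.adjoin ℝ S) :
    ∃ M, ∀ i, |E i b| ≤ M := by
  induction hb using Algebra.adjoin_induction with
  | mem s hs => exact hS s hs
  | algebraMap r => exact ⟨|r|, fun i => by simp⟩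
  | add b c _ _ hb hc =>
    obtain ⟨M, hM⟩ := hb
    obtain ⟨M', hM'⟩ := hc
    exact ⟨M + M', fun i => by
      rw [map_add]; exact (abs_add_le _ _).trans (add_le_add (hM i) (hM' i))⟩
  | mul b c _ _ hb hc =>
    obtain ⟨M, hM⟩ := hb
    obtain ⟨M', hM'⟩ := hc
    exact ⟨M * M', fun i => by
      rw [map_mul, abs_mul]
      exact mul_le_mul (hM i) (hM' i) (abs_nonneg _) ((abs_nonneg _).trans (hM i))⟩

lemma exists_mem_adjoin_localizationAway_pow_eq [Finite σ] {k : Type*} [Field k] [CharZero k]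
    {p d : MvPolynomial σ k} (hp : p ≠ 0) (hd : d ≠ 0) :
    let τ := algebraMap (MvPolynomial σ k) (Localization.Away d)
    let inv := IsLocalization.Away.invSelf d
    ∃ N : ℕ, ∃ b ∈ Algebra.adjoin k (Set.range (τ ∘ X) ∪
      insert (τ p * inv) (Set.range fun j => τ (pderiv j p) * inv)), (τ p * inv) ^ N = τ p * b := by
  have hle : Submonoid.powers d ≤ nonZeroDivisors _ :=
    powers_le_nonZeroDivisors_of_noZeroDivisors hd
  have : IsDomain (Localization.Away d) := IsLocalization.isDomain_localization hle
  exact exists_mem_adjoin_pow_mul_eq (IsScalarTower.toAlgHom k _ (Localization.Away d))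
    ((map_ne_zero_iff _ (IsLocalization.injective _ hle)).mpr hp) fun j =>
      (mul_right_comm _ _ _).trans (mul_assoc _ _ _)

variable [Fintype σ]

-- The cofactor `b` is a polynomial in the coordinates, `p / d` and the `∂ⱼp / d`, all of which are
-- bounded on the region in question.
lemma exists_abs_eval_pow_le_of_pivot (p d : MvPolynomial σ ℝ) (r : ℝ) :
    ∃ N : ℕ, ∃ M : ℝ, ∀ x : σ → ℝ, ‖x‖ ≤ r → eval x d ≠ 0 → |eval x p| ≤ |eval x d| →
      (∀ j, |eval x (pderiv j p)| ≤ |eval x d|) →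
        |eval x p| ^ N ≤ M * |eval x p| * |eval x d| ^ N := by
  rcases eq_or_ne p 0 with rfl | hp
  · exact ⟨1, 0, by simp⟩
  rcases eq_or_ne d 0 with rfl | hd
  · exact ⟨0, 0, fun x _ h => absurd (map_zero _) h⟩
  obtain ⟨N, b, hb, hN⟩ := exists_mem_adjoin_localizationAway_pow_eq hp hd
  let R := {x : σ → ℝ // ‖x‖ ≤ r ∧ eval x d ≠ 0 ∧ |eval x p| ≤ |eval x d| ∧
    ∀ j, |eval x (pderiv j p)| ≤ |eval x d|}
  choose E hE hE_div using fun x : R => exists_algHom_localizationAway_eq_eval x.2.2.1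
  obtain ⟨M, hM⟩ := exists_abs_le_of_mem_adjoin (E := E) (by
    rintro s (⟨i, rfl⟩ | rfl | ⟨j, rfl⟩)
    · refine ⟨r, fun x => ?_⟩
      simpa [hE] using (norm_le_pi_norm x.1 i).trans x.2.1
    · refine ⟨1, fun x => ?_⟩
      rw [hE_div, abs_div]
      exact div_le_one_of_le₀ x.2.2.2.1 (abs_nonneg _)
    · refine ⟨1, fun x => ?_⟩
      rw [hE_div, abs_div]
      exact div_le_one_of_le₀ (x.2.2.2.2 j) (abs_nonneg _)) hb
  refine ⟨N, M, fun x hx hdx hpx hjx => ?_⟩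
  have h := congrArg (E ⟨x, hx, hdx, hpx, hjx⟩) hN
  rw [map_pow, map_mul _ _ b, hE_div, hE, div_pow, div_eq_iff (pow_ne_zero N hdx)] at h
  rw [← abs_pow, h, abs_mul, abs_mul, abs_pow, mul_comm |eval x p|]
  gcongr
  exact hM _

-- The exponent and the constant are uniform in the pivot `a`, the largest of `p` and its partials.
lemma exists_abs_eval_pow_le_pivot (p : MvPolynomial σ ℝ) (r : ℝ) :
    ∃ n : ℕ, ∃ M : ℝ, ∀ x : σ → ℝ, ‖x‖ ≤ r → ∃ a : Option σ,
      |eval x p| ^ (n + 1) ≤ M * |eval x (a.elim p (pderiv · p))| ^ (n + 2) := by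
  choose N M h using fun a : Option σ =>
    exists_abs_eval_pow_le_of_pivot p (a.elim p (pderiv · p)) r
  refine ⟨∑ a, N a, ∑ a, |M a|, fun x hx => ?_⟩
  obtain ⟨a, ha⟩ := Finite.exists_max fun a : Option σ => |eval x (a.elim p (pderiv · p))|
  refine ⟨a, ?_⟩
  set G := |eval x (a.elim p (pderiv · p))|
  set P := |eval x p|
  have hPG : P ≤ G := ha none
  have : 0 ≤ ∑ a, |M a| := Finset.sum_nonneg fun a _ => abs_nonneg (M a)
  rcases (abs_nonneg (eval x p)).eq_or_lt with hP | hP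
  · rw [show P = 0 from hP.symm, zero_pow (Nat.succ_ne_zero _)]
    positivity
  have hG : G ≠ 0 := (hP.trans_le hPG).ne'
  have hN : N a ≤ ∑ a, N a := Finset.single_le_sum (fun _ _ => Nat.zero_le _) (Finset.mem_univ a)
  obtain ⟨m, hm⟩ := Nat.exists_eq_add_of_le hN
  have hpivot := h a x hx (abs_ne_zero.mp hG) hPG fun j => ha (some j)
  have hM : M a ≤ ∑ a, |M a| := (le_abs_self _).trans
    (Finset.single_le_sum (f := fun a => |M a|) (fun _ _ => abs_nonneg _) (Finset.mem_univ a))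
  refine le_of_mul_le_mul_left ?_ hP
  calc P * P ^ (∑ a, N a + 1) = P ^ N a * P ^ (m + 2) := by rw [hm]; ring
    _ ≤ M a * P * G ^ N a * P ^ (m + 2) := by gcongr
    _ ≤ (∑ a, |M a|) * P * G ^ N a * G ^ (m + 2) := by gcongr
    _ = P * ((∑ a, |M a|) * G ^ (∑ a, N a + 2)) := by rw [hm]; ring

theorem lojasiewicz_of_eval_eq_zero {p : MvPolynomial σ ℝ} {x₀ : σ → ℝ} (hp : eval x₀ p = 0) :
    ∃ n : ℕ, ∃ M : ℝ, ∀ᶠ x in 𝓝 x₀,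
      |eval x p| ^ (n + 1) ≤ M * (∑ j, |eval x (pderiv j p)|) ^ (n + 2) := by
  obtain ⟨n, M, h⟩ := exists_abs_eval_pow_le_pivot p (‖x₀‖ + 1)
  have hnorm : ∀ᶠ x in 𝓝 x₀, ‖x‖ ≤ ‖x₀‖ + 1 :=
    (continuous_norm.tendsto x₀).eventually (Iic_mem_nhds (lt_add_one _))
  have hsmall : ∀ᶠ x in 𝓝 x₀, |M| * |eval x p| < 1 := by
    have : Tendsto (fun x => |M| * |eval x p|) (𝓝 x₀) (𝓝 (|M| * |eval x₀ p|)) :=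
      ((MvPolynomial.continuous_eval p).abs.const_mul _).tendsto x₀
    rw [hp, abs_zero, mul_zero] at this
    exact this.eventually (Iio_mem_nhds one_pos)
  refine ⟨n, |M|, ?_⟩
  filter_upwards [hnorm, hsmall] with x hx hxp
  have : 0 ≤ ∑ j, |eval x (pderiv j p)| := Finset.sum_nonneg fun j _ => abs_nonneg _
  obtain ⟨_ | j, ha⟩ := h x hx
  · rcases (abs_nonneg (eval x p)).eq_or_lt with hP | hP
    · rw [← hP, zero_pow n.succ_ne_zero]
      positivity
    refine absurd ha (not_le.mpr ?_)
    calc M * |eval x p| ^ (n + 2) ≤ |M| * |eval x p| ^ (n + 2) := by gcongr; exact le_abs_self M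
      _ = (|M| * |eval x p|) * |eval x p| ^ (n + 1) := by ring
      _ < |eval x p| ^ (n + 1) := mul_lt_of_lt_one_left (pow_pos hP _) hxp
  · refine ha.trans ?_
    gcongr
    · exact le_abs_self M
    · exact Finset.single_le_sum (f := fun j => |eval x (pderiv j p)|)
        (fun _ _ => abs_nonneg _) (Finset.mem_univ j)

theorem lojasiewicz (p : MvPolynomial σ ℝ) (x₀ : σ → ℝ) :
    ∃ n : ℕ, ∃ M : ℝ, ∀ᶠ x in 𝓝 x₀,
      |eval x p - eval x₀ p| ^ (n + 1) ≤ M * (∑ j, |eval x (pderiv j p)|) ^ (n + 2) := by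
  obtain ⟨n, M, h⟩ := lojasiewicz_of_eval_eq_zero (p := p - C (eval x₀ p)) (x₀ := x₀) (by simp)
  exact ⟨n, M, by simpa only [map_sub, eval_C, pderiv_C, sub_zero] using h⟩

end Lojasiewicz

section Descent

open Topology

variable {E : Type*} [PseudoMetricSpace E] {p : ℕ → E} {q : E}

/-- The filter of times `k → ∞` at which `p k` is close to `q`: the times when estimates that hold
near a limit point `q` of `p` apply. -/
def nearTimes {E : Type*} [TopologicalSpace E] (p : ℕ → E) (q : E) : Filter ℕ :=
  comap p (𝓝 q) ⊓ atTop

lemma nearTimes_le_atTop : nearTimes p q ≤ atTop := inf_le_right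

lemma tendsto_nearTimes : Tendsto p (nearTimes p q) (𝓝 q) := tendsto_comap.mono_left inf_le_left

lemma neBot_nearTimes (hp : MapClusterPt q atTop p) : (nearTimes p q).NeBot :=
  (map_neBot_iff p).mp ((Filter.push_pull' p atTop (𝓝 q)).symm ▸ hp)

lemma eventually_nearTimes_iff {P : ℕ → Prop} :
    (∀ᶠ k in nearTimes p q, P k) ↔
      ∃ ρ > 0, ∃ k₀, ∀ k ≥ k₀, dist (p k) q < ρ → P k := by
  rw [nearTimes, ((Metric.nhds_basis_ball.comap p).inf atTop_basis).eventually_iff]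
  simp only [and_true, Prod.exists, Set.mem_inter_iff, Set.mem_preimage, Metric.mem_ball,
    Set.mem_Ici, gt_iff_lt, exists_and_left, and_imp]
  exact exists_congr fun ρ => and_congr_right fun _ => exists_congr fun k₀ =>
    forall_congr' fun k => imp.swap

lemma tendsto_of_two_mul_dist_le {e : ℕ → ℝ} (hp : MapClusterPt q atTop p)
    (hsucc : Tendsto (fun k => p (k + 1)) (nearTimes p q) (𝓝 q))
    (he : ∀ k, 0 ≤ e k) (he_tendsto : Tendsto e atTop (𝓝 0))
    (hdist : ∀ᶠ k in nearTimes p q,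
      2 * dist (p (k + 2)) (p (k + 1)) ≤ dist (p (k + 1)) (p k) + (e (k + 1) - e (k + 2))) :
    Tendsto p atTop (𝓝 q) := by
  have := neBot_nearTimes hp
  obtain ⟨ρ, hρ, k₀, hdist⟩ := eventually_nearTimes_iff.mp hdist
  have hpot : Tendsto (fun k => dist (p (k + 1)) q + dist (p (k + 1)) (p k) + e (k + 1))
      (nearTimes p q) (𝓝 0) := by
    have he' := ((tendsto_add_atTop_iff_nat 1).mpr he_tendsto).mono_left
      (nearTimes_le_atTop (p := p) (q := q))
    simpa using
      ((hsucc.dist (tendsto_const_nhds (x := q))).add (hsucc.dist tendsto_nearTimes)).add he'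
  refine Metric.tendsto_atTop.mpr fun ε hε => ?_
  obtain ⟨k₁, hk₁, hpot₁⟩ := ((eventually_ge_atTop k₀).filter_mono nearTimes_le_atTop |>.and
    (hpot.eventually_lt_const (lt_min hε hρ))).exists
  have trapped (k) (hk : k₁ ≤ k) :
      dist (p (k + 1)) q + dist (p (k + 1)) (p k) + e (k + 1) < min ε ρ := by
    induction k, hk using Nat.le_induction with
    | base => exact hpot₁
    | succ k hk ih =>
      have hclose := dist_triangle_left (p k) q (p (k + 1))
      have hnext := hdist k (hk₁.trans hk) (by linarith [he (k + 1), min_le_right ε ρ])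
      have hstep := dist_triangle (p (k + 2)) (p (k + 1)) q
      linarith
  refine ⟨k₁ + 1, fun k hk => ?_⟩
  obtain ⟨k, rfl⟩ := Nat.exists_eq_add_of_le' (Nat.le_of_add_left_le hk)
  have := trapped k (by lia)
  linarith [min_le_left ε ρ, he (k + 1), dist_nonneg (x := p (k + 1)) (y := p k)]

lemma two_mul_le_add_mul_sub {n : ℕ} {a b c C d d' : ℝ} (hb : 0 ≤ b) (hab : b ≤ a) (hc : 0 < c)
    (hC : 0 ≤ C) (hd : 0 ≤ d) (hd' : c * d' ^ 2 ≤ a ^ (n + 2) - b ^ (n + 2))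
    (ha : (a ^ (n + 2)) ^ (n + 1) ≤ C * d ^ (n + 2)) :
    2 * d' ≤ d + (n + 2) * (C + 1) / c * (a - b) := by
  have hsub : 0 ≤ a - b := sub_nonneg.mpr hab
  have hpow : a ^ (n + 1) ≤ (C + 1) * d := by
    refine le_of_pow_le_pow_left₀ (n := n + 2) (by lia) (by positivity) ?_
    rw [← pow_mul, mul_comm, pow_mul, mul_pow]
    refine ha.trans ?_
    gcongr
    exact (le_add_of_nonneg_right zero_le_one).trans (le_self_pow₀ (by linarith) (by lia))
  have hmvt : a ^ (n + 2) - b ^ (n + 2) ≤ (n + 2) * a ^ (n + 1) * (a - b) := by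
    have h := abs_pow_sub_pow_le a b (n + 2)
    rw [abs_of_nonneg hsub, abs_of_nonneg hb, abs_of_nonneg (hb.trans hab), max_eq_left hab] at h
    push_cast at h
    linarith [le_abs_self (a ^ (n + 2) - b ^ (n + 2)),
      mul_comm (a - b) ((n + 2) * a ^ (n + 1))]
  have hsq : d' ^ 2 ≤ d * ((n + 2) * (C + 1) / c * (a - b)) := by
    refine le_of_mul_le_mul_left ?_ hc
    calc c * d' ^ 2 ≤ (n + 2) * a ^ (n + 1) * (a - b) := hd'.trans hmvt
      _ ≤ (n + 2) * ((C + 1) * d) * (a - b) := by gcongr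
      _ = c * (d * ((n + 2) * (C + 1) / c * (a - b))) := by field_simp
  have : 0 ≤ (n + 2) * (C + 1) / c * (a - b) := by positivity
  refine (abs_le_of_sq_le_sq' ?_ (by positivity)).2
  nlinarith [sq_nonneg (d - (n + 2) * (C + 1) / c * (a - b))]

theorem tendsto_of_sufficient_decrease_of_lojasiewicz {Δ : ℕ → ℝ} {n : ℕ} {c C : ℝ}
    (hp : MapClusterPt q atTop p) (hΔ : Antitone Δ) (hΔ_tendsto : Tendsto Δ atTop (𝓝 0))
    (hc : 0 < c) (hsucc : Tendsto (fun k => p (k + 1)) (nearTimes p q) (𝓝 q))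
    (hdecr : ∀ᶠ k in nearTimes p q, c * dist (p (k + 1)) (p k) ^ 2 ≤ Δ k - Δ (k + 1))
    (hloj : ∀ᶠ k in nearTimes p q,
      Δ (k + 1) ^ (n + 1) ≤ C * dist (p (k + 1)) (p k) ^ (n + 2)) :
    Tendsto p atTop (𝓝 q) := by
  have hΔ_nonneg (k) : 0 ≤ Δ k := hΔ.le_of_tendsto hΔ_tendsto k
  let e (k : ℕ) : ℝ := Δ k ^ (((n + 2 : ℕ) : ℝ)⁻¹)
  have he_nonneg (k) : 0 ≤ e k := Real.rpow_nonneg (hΔ_nonneg k) _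
  have he_anti : Antitone e := fun i j hij =>
    Real.rpow_le_rpow (hΔ_nonneg j) (hΔ hij) (by positivity)
  have he_pow (k) : e k ^ (n + 2) = Δ k := Real.rpow_inv_natCast_pow (hΔ_nonneg k) (by lia)
  have he_tendsto : Tendsto e atTop (𝓝 0) := by
    have h := hΔ_tendsto.rpow_const (p := ((n + 2 : ℕ) : ℝ)⁻¹) (Or.inr (by positivity))
    rwa [Real.zero_rpow (by positivity)] at h
  have hsucc' : Tendsto (· + 1) (nearTimes p q) (nearTimes p q) :=
    tendsto_inf.mpr ⟨tendsto_comap_iff.mpr hsucc,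
      (tendsto_add_atTop_nat 1).mono_left nearTimes_le_atTop⟩
  refine tendsto_of_two_mul_dist_le hp hsucc (e := fun k => (n + 2) * (|C| + 1) / c * e k)
    (fun k => mul_nonneg (by positivity) (he_nonneg k))
    (by simpa using he_tendsto.const_mul ((n + 2) * (|C| + 1) / c)) ?_
  filter_upwards [hsucc'.eventually hdecr, hloj] with k hdecr hloj
  rw [← mul_sub]
  refine two_mul_le_add_mul_sub (n := n) (he_nonneg _) (he_anti (Nat.le_succ (k + 1))) hc
    (abs_nonneg C) dist_nonneg (by rwa [he_pow, he_pow]) ?_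
  rw [he_pow]
  exact hloj.trans (by gcongr; exact le_abs_self C)

end Descent

section Grassmannian

open scoped Matrix.Norms.Frobenius
open Topology

variable {ι : Type*} [Fintype ι]

lemma frobenius_norm_sq_eq_trace {κ : Type*} [Fintype κ] (M : Matrix ι κ ℝ) :
    ‖M‖ ^ 2 = (Mᵀ * M).trace := by
  rw [frobenius_norm_def, ← Real.sqrt_eq_rpow, Real.sq_sqrt (by positivity), Finset.sum_comm]
  simp [trace, mul_apply, sq]

lemma abs_trace_mul_le (A B : Matrix ι ι ℝ) : |(A * B).trace| ≤ ‖A‖ * ‖B‖ := by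
  refine abs_le_of_sq_le_sq ?_ (by positivity)
  rw [mul_pow, ← frobenius_norm_transpose A, frobenius_norm_sq_eq_trace, frobenius_norm_sq_eq_trace]
  simp only [trace, diag, mul_apply, transpose_apply, ← sq, ← Finset.sum_product']
  exact Finset.sum_mul_sq_le_sq_mul_sq _ (fun x : ι × ι => A x.1 x.2) (fun x => B x.2 x.1)

lemma abs_dotProduct_mulVec_le (M : Matrix ι ι ℝ) (v : ι → ℝ) :
    |v ⬝ᵥ M *ᵥ v| ≤ ‖M‖ * (v ⬝ᵥ v) := by
  have hv : ‖vecMulVec v v‖ ≤ v ⬝ᵥ v := by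
    have h := frobenius_norm_mul (replicateCol Unit v) (replicateRow Unit v)
    rwa [← vecMulVec_eq, frobenius_norm_replicateCol, frobenius_norm_replicateRow, ← sq,
      ← real_inner_self_eq_norm_sq, EuclideanSpace.inner_toLp_toLp, star_trivial] at h
  calc |v ⬝ᵥ M *ᵥ v| = |(M * vecMulVec v v).trace| := by
        rw [mul_vecMulVec, trace_vecMulVec, dotProduct_comm]
    _ ≤ ‖M‖ * ‖vecMulVec v v‖ := abs_trace_mul_le _ _
    _ ≤ ‖M‖ * (v ⬝ᵥ v) := by gcongr

lemma posSemidef_of_norm_sub_le [DecidableEq ι] {A B : Matrix ι ι ℝ} {η : ℝ} (hA : A.IsHermitian)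
    (hB : (B - η • 1).PosSemidef) (h : ‖A - B‖ ≤ η) : A.PosSemidef := by
  refine .of_dotProduct_mulVec_nonneg hA fun v => ?_
  have hBv := hB.dotProduct_mulVec_nonneg v
  have hAB := neg_le_of_abs_le (abs_dotProduct_mulVec_le (A - B) v)
  have hη : ‖A - B‖ * (v ⬝ᵥ v) ≤ η * (v ⬝ᵥ v) := by
    gcongr
    exact Finset.sum_nonneg fun i _ => mul_self_nonneg (v i)
  simp only [star_trivial, sub_mulVec, smul_mulVec, one_mulVec, dotProduct_sub, dotProduct_smul,
    smul_eq_mul] at *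
  linarith

lemma trace_mul_nonneg_of_isStarProjection {P M : Matrix ι ι ℝ} (hP : IsStarProjection P)
    (hM : M.PosSemidef) : 0 ≤ (P * M).trace := by
  have h := (hM.conjTranspose_mul_mul_same P).trace_nonneg
  rwa [← star_eq_conjTranspose, hP.isSelfAdjoint.star_eq, trace_mul_comm, ← mul_assoc,
    hP.isIdempotentElem.eq] at h

/-- The Grassmannian of `r`-dimensional subspaces of `ℝ^ι`, a subspace being represented by its
orthogonal projection `B Bᵀ`, where the columns of `B` form an orthonormal basis. -/
def grassmannian (ι : Type*) [Fintype ι] (r : ℕ) : Set (Matrix ι ι ℝ) :=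
  {P | ∃ B : Matrix ι (Fin r) ℝ, Bᵀ * B = 1 ∧ B * Bᵀ = P}

variable {r : ℕ} {P P' Q S S' : Matrix ι ι ℝ} {l u : ℝ}

lemma isStarProjection_of_mem_grassmannian (hP : P ∈ grassmannian ι r) : IsStarProjection P := by
  obtain ⟨B, hB, rfl⟩ := hP
  refine ⟨?_, ?_⟩
  · rw [IsIdempotentElem, Matrix.mul_assoc, ← Matrix.mul_assoc Bᵀ, hB, Matrix.one_mul]
  · simp [IsSelfAdjoint, star_eq_conjTranspose]

lemma trace_of_mem_grassmannian (hP : P ∈ grassmannian ι r) : P.trace = r := by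
  obtain ⟨B, hB, rfl⟩ := hP
  rw [trace_mul_comm, hB, trace_one, Fintype.card_fin]

lemma norm_sub_sq_of_mem_grassmannian (hP : P ∈ grassmannian ι r) (hQ : Q ∈ grassmannian ι r) :
    ‖P - Q‖ ^ 2 = 2 * (r - (P * Q).trace) := by
  have hP' := isStarProjection_of_mem_grassmannian hP
  have hQ' := isStarProjection_of_mem_grassmannian hQ
  have hsub : (P - Q)ᵀ = P - Q := by
    rw [← conjTranspose_eq_transpose_of_trivial, ← star_eq_conjTranspose, star_sub,
      hP'.isSelfAdjoint.star_eq, hQ'.isSelfAdjoint.star_eq]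
  rw [frobenius_norm_sq_eq_trace, hsub, sub_mul, mul_sub, mul_sub, hP'.isIdempotentElem.eq,
    hQ'.isIdempotentElem.eq, trace_sub, trace_sub, trace_sub, trace_of_mem_grassmannian hP,
    trace_of_mem_grassmannian hQ, trace_mul_comm Q P]
  ring

lemma mul_mul_transpose_mem_grassmannian [DecidableEq ι] {U : Matrix ι ι ℝ} (hU : Uᵀ * U = 1)
    (hP : P ∈ grassmannian ι r) : U * P * Uᵀ ∈ grassmannian ι r := by
  obtain ⟨B, hB, rfl⟩ := hP
  refine ⟨U * B, ?_, ?_⟩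
  · rw [transpose_mul, Matrix.mul_assoc, ← Matrix.mul_assoc Uᵀ, hU, Matrix.one_mul, hB]
  · simp only [transpose_mul, Matrix.mul_assoc]

lemma hasDerivAt_exp_mul_mul_exp_neg [DecidableEq ι] (K P : Matrix ι ι ℝ) :
    HasDerivAt (fun s : ℝ => NormedSpace.exp (s • K) * P * NormedSpace.exp (s • -K))
      (K * P - P * K) 0 := by
  have hexp (K : Matrix ι ι ℝ) : HasDerivAt (fun s : ℝ => NormedSpace.exp (s • K)) K 0 := by
    have h := hasDerivAt_exp_smul_const (𝕂 := ℝ) K 0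
    rw [zero_smul, NormedSpace.exp_zero, one_mul] at h
    exact h
  have h := ((hexp K).mul_const P).mul (hexp (-K))
  simp only [zero_smul, NormedSpace.exp_zero, one_mul, mul_one, mul_neg, ← sub_eq_add_neg] at h
  exact h

-- Otherwise rotating `P` along `exp (s [P, S])` would increase the trace at rate `‖[P, S]‖²`.
lemma commute_of_isMaxOn_trace_mul (hP : P ∈ grassmannian ι r) (hS : S.IsHermitian)
    (hmax : IsMaxOn (fun Q => (Q * S).trace) (grassmannian ι r) P) : Commute P S := by
  classical
  set K := P * S - S * P with hK
  have hPt : Pᵀ = P := by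
    rw [← conjTranspose_eq_transpose_of_trivial]
    exact (isStarProjection_of_mem_grassmannian hP).isSelfAdjoint
  have hSt : Sᵀ = S := by simpa using hS.eq
  have hKt : Kᵀ = -K := by
    rw [hK, transpose_sub, transpose_mul, transpose_mul, hPt, hSt, neg_sub]
  let U (s : ℝ) : Matrix ι ι ℝ := NormedSpace.exp (s • K)
  have hUt (s) : (U s)ᵀ = NormedSpace.exp (s • -K) := by
    rw [← hKt, ← transpose_smul, exp_transpose]
  have hU (s) : (U s)ᵀ * U s = 1 := by
    rw [hUt, smul_neg, exp_neg]
    exact nonsing_inv_mul _ ((isUnit_iff_isUnit_det _).mp (isUnit_exp _))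
  have hderiv :
      HasDerivAt (fun s => (U s * P * (U s)ᵀ * S).trace) ((K * P - P * K) * S).trace 0 := by
    simp only [hUt]
    exact (LinearMap.toContinuousLinearMap (traceLinearMap ι ℝ ℝ)).hasFDerivAt.comp_hasDerivAt 0
      ((hasDerivAt_exp_mul_mul_exp_neg K P).mul_const S)
  have hzero : ((K * P - P * K) * S).trace = 0 := by
    refine IsLocalMax.hasDerivAt_eq_zero (.of_forall fun s => ?_) hderiv
    simpa [U] using hmax (mul_mul_transpose_mem_grassmannian (hU s) hP)
  have hnorm : ‖K‖ ^ 2 = -((K * P - P * K) * S).trace := by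
    rw [frobenius_norm_sq_eq_trace, hKt, sub_mul, trace_sub, Matrix.mul_assoc, Matrix.mul_assoc,
      trace_mul_comm P, Matrix.mul_assoc, ← trace_sub, ← Matrix.mul_sub, ← hK, neg_mul, trace_neg]
  rw [hzero, neg_zero, sq_eq_zero_iff, norm_eq_zero] at hnorm
  exact sub_eq_zero.mp hnorm

variable [DecidableEq ι]

/-- `S` has a spectral gap `(u, l)` along the projection `Q`: its quadratic form is at least `l` on
the range of `Q` and at most `u` on the complement. Hermitianness of the two matrices encodes that
`Q` commutes with a symmetric `S`. -/
structure IsSpectralGap (Q S : Matrix ι ι ℝ) (l u : ℝ) : Prop where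
  lt : u < l
  posSemidef_range : (Q * S - l • Q).PosSemidef
  posSemidef_compl : (u • (1 - Q) - (1 - Q) * S).PosSemidef

namespace IsSpectralGap

lemma norm_sub_sq_le (h : IsSpectralGap Q S l u) (hQ : Q ∈ grassmannian ι r)
    (hP : P ∈ grassmannian ι r) :
    (l - u) / 2 * ‖P - Q‖ ^ 2 ≤ (Q * S).trace - (P * S).trace := by
  have hPproj := isStarProjection_of_mem_grassmannian hP
  have hrange := trace_mul_nonneg_of_isStarProjection hPproj.one_sub h.posSemidef_range
  have hcompl := trace_mul_nonneg_of_isStarProjection hPproj h.posSemidef_compl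
  rw [norm_sub_sq_of_mem_grassmannian hP hQ]
  simp only [sub_mul, mul_sub, one_mul, mul_one, mul_smul_comm, trace_sub, trace_smul, smul_eq_mul,
    smul_sub, trace_of_mem_grassmannian hP, trace_of_mem_grassmannian hQ] at hrange hcompl
  linarith

lemma eq_of_isMaxOn (h : IsSpectralGap Q S l u) (hQ : Q ∈ grassmannian ι r)
    (hP : P ∈ grassmannian ι r)
    (hmax : IsMaxOn (fun Q => (Q * S).trace) (grassmannian ι r) P) : P = Q := by
  have hle := (h.norm_sub_sq_le hQ hP).trans (sub_nonpos.mpr (hmax hQ))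
  have hpos : 0 < (l - u) / 2 := half_pos (sub_pos.mpr h.lt)
  have hsq : ‖P - Q‖ ^ 2 ≤ 0 := nonpos_of_mul_nonpos_right hle hpos
  exact sub_eq_zero.mp (norm_eq_zero.mp (pow_eq_zero_iff two_ne_zero |>.mp
    (hsq.antisymm (sq_nonneg _))))

lemma norm_sub_le_of_isMaxOn (h : IsSpectralGap P S l u) (hP : P ∈ grassmannian ι r)
    (hP' : P' ∈ grassmannian ι r)
    (hmax : IsMaxOn (fun Q => (Q * S').trace) (grassmannian ι r) P') :
    ‖P' - P‖ ≤ 2 / (l - u) * ‖S' - S‖ := by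
  have hgrowth := h.norm_sub_sq_le hP hP'
  have hmax' : (P * S').trace ≤ (P' * S').trace := hmax hP
  have hcs := (le_abs_self _).trans (abs_trace_mul_le (P' - P) (S' - S))
  simp only [sub_mul, mul_sub, trace_sub] at hcs
  rw [div_mul_eq_mul_div, le_div_iff₀ (sub_pos.mpr h.lt)]
  rcases (norm_nonneg (P' - P)).eq_or_lt with hzero | hpos
  · rw [← hzero, zero_mul]
    positivity
  · refine le_of_mul_le_mul_left ?_ hpos
    linarith

lemma of_posSemidef (hQ : IsStarProjection Q) (hQS : Commute Q S) (hlt : u < l)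
    (h : (Q * S - l • Q + (u • (1 - Q) - (1 - Q) * S)).PosSemidef) : IsSpectralGap Q S l u where
  lt := hlt
  posSemidef_range := by
    convert h.conjTranspose_mul_mul_same Q using 1
    rw [← star_eq_conjTranspose, hQ.isSelfAdjoint.star_eq]
    have hQQ : Q * Q = Q := hQ.isIdempotentElem
    have hQSQ : Q * (S * Q) = Q * S := by rw [← hQS.eq, ← mul_assoc, hQQ]
    simp only [mul_add, add_mul, mul_sub, sub_mul, mul_one, one_mul, smul_sub, mul_smul_comm,
      smul_mul_assoc, hQQ, mul_assoc, hQSQ, ← mul_assoc Q Q]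
    abel
  posSemidef_compl := by
    convert h.conjTranspose_mul_mul_same (1 - Q) using 1
    rw [← star_eq_conjTranspose, hQ.one_sub.isSelfAdjoint.star_eq]
    have hQQ : Q * Q = Q := hQ.isIdempotentElem
    simp only [mul_add, add_mul, mul_sub, sub_mul, mul_one, one_mul, smul_sub, mul_smul_comm,
      smul_mul_assoc, hQQ, mul_assoc, ← mul_assoc Q Q, ← hQS.eq]
    abel

lemma eventually (h : IsSpectralGap Q S l u) {η : ℝ} (hη : 0 < η)
    (hlt : u + η < l - η) :
    ∀ᶠ x in 𝓝 (Q, S), IsStarProjection x.1 → x.2.IsHermitian → Commute x.1 x.2 →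
      IsSpectralGap x.1 x.2 (l - η) (u + η) := by
  let D (x : Matrix ι ι ℝ × Matrix ι ι ℝ) : Matrix ι ι ℝ :=
    x.1 * x.2 - (l - η) • x.1 + ((u + η) • (1 - x.1) - (1 - x.1) * x.2)
  have hD : Continuous D := by fun_prop
  have hnear : ∀ᶠ x in 𝓝 (Q, S), ‖D x - D (Q, S)‖ ≤ η := by
    filter_upwards [hD.continuousAt.eventually (Metric.closedBall_mem_nhds _ hη)] with x hx
    rwa [← dist_eq_norm]
  filter_upwards [hnear] with x hx hproj hsymm hcomm
  refine of_posSemidef hproj hcomm hlt (posSemidef_of_norm_sub_le ?_ ?_ hx)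
  · have h1 := hproj.isSelfAdjoint.star_eq
    have h2 := hsymm.eq
    rw [star_eq_conjTranspose] at h1
    simp only [IsHermitian, sub_mul, one_mul, conjTranspose_add, conjTranspose_sub,
      conjTranspose_smul, conjTranspose_one, conjTranspose_mul, h1, h2, hcomm.eq, star_trivial]
  · convert h.posSemidef_range.add h.posSemidef_compl using 1
    simp only [D]
    module

end IsSpectralGap

end Grassmannian

section SpectralDecomposition

variable {ι : Type*} [Fintype ι] [DecidableEq ι]

lemma diagonal_indicator_mem_grassmannian (T : Finset ι) :
    diagonal (fun i => if i ∈ T then (1 : ℝ) else 0) ∈ grassmannian ι T.card := by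
  let f : Fin T.card ≃ T := T.equivFin.symm
  refine ⟨of fun a i => if a = f i then 1 else 0, ?_, ?_⟩
  · ext i j
    simp [mul_apply, one_apply, eq_comm]
  · ext a b
    simp only [mul_apply, transpose_apply, of_apply]
    rw [Equiv.sum_comp f fun x : T => (if a = x then (1 : ℝ) else 0) * if b = x then 1 else 0,
      Finset.sum_coe_sort T fun x => (if a = x then (1 : ℝ) else 0) * if b = x then 1 else 0]
    by_cases hab : a = b <;> simp [hab]

lemma isSpectralGap_diagonal {T : Finset ι} {e : ι → ℝ} {l u : ℝ} (hlu : u < l)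
    (hl : ∀ i ∈ T, l ≤ e i) (hu : ∀ i ∉ T, e i ≤ u) :
    IsSpectralGap (diagonal fun i => if i ∈ T then (1 : ℝ) else 0) (diagonal e) l u where
  lt := hlu
  posSemidef_range := by
    rw [diagonal_mul_diagonal, ← diagonal_smul, diagonal_sub, posSemidef_diagonal_iff]
    intro i
    by_cases hi : i ∈ T <;> simp [hi, hl]
  posSemidef_compl := by
    rw [← diagonal_one, diagonal_sub, diagonal_mul_diagonal, ← diagonal_smul, diagonal_sub,
      posSemidef_diagonal_iff]
    intro i
    by_cases hi : i ∈ T <;> simp [hi, hu]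

lemma IsSpectralGap.conjStarAlgAut {Q S : Matrix ι ι ℝ} {l u : ℝ} (h : IsSpectralGap Q S l u)
    (U : unitaryGroup ι ℝ) :
    IsSpectralGap (Unitary.conjStarAlgAut ℝ _ U Q) (Unitary.conjStarAlgAut ℝ _ U S) l u where
  lt := h.lt
  posSemidef_range := by
    rw [← map_mul, ← map_smul, ← map_sub, Unitary.conjStarAlgAut_apply]
    exact h.posSemidef_range.mul_mul_conjTranspose_same _
  posSemidef_compl := by
    rw [← map_one (Unitary.conjStarAlgAut ℝ _ U), ← map_sub, ← map_smul, ← map_mul, ← map_sub,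
      Unitary.conjStarAlgAut_apply]
    exact h.posSemidef_compl.mul_mul_conjTranspose_same _

lemma exists_isSpectralGap_of_eigenvalues₀ {S : Matrix ι ι ℝ} (hS : S.IsHermitian) {r : ℕ}
    (hr : r ≤ Fintype.card ι) {l u : ℝ} (hlu : u < l)
    (hl : ∀ i : Fin (Fintype.card ι), i < r → l ≤ hS.eigenvalues₀ i)
    (hu : ∀ i : Fin (Fintype.card ι), r ≤ i → hS.eigenvalues₀ i ≤ u) :
    ∃ Q ∈ grassmannian ι r, IsSpectralGap Q S l u := by
  let σ : Fin (Fintype.card ι) ≃ ι := Fintype.equivOfCardEq (Fintype.card_fin _)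
  let T : Finset ι := (Finset.univ.filter fun i : Fin (Fintype.card ι) => i < r).map σ.toEmbedding
  have hT (i : ι) : i ∈ T ↔ σ.symm i < r := by simp [T, Finset.mem_map_equiv]
  have hcard : T.card = r := by rw [Finset.card_map, Fin.card_filter_val_lt, min_eq_right hr]
  refine ⟨Unitary.conjStarAlgAut ℝ _ hS.eigenvectorUnitary
    (diagonal fun i => if i ∈ T then (1 : ℝ) else 0), ?_, ?_⟩
  · rw [Unitary.conjStarAlgAut_apply]
    exact mul_mul_transpose_mem_grassmannian (mem_unitaryGroup_iff'.mp hS.eigenvectorUnitary.2)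
      (hcard ▸ diagonal_indicator_mem_grassmannian T)
  · convert (isSpectralGap_diagonal (T := T) (e := hS.eigenvalues) hlu ?_ ?_).conjStarAlgAut
      hS.eigenvectorUnitary
    · exact hS.spectral_theorem
    · exact fun i hi => hl _ ((hT i).mp hi)
    · exact fun i hi => hu _ (not_lt.mp fun h => hi ((hT i).mpr h))

lemma eigList_eq_ofFn {m : ℕ} {κ : Type*} [Fintype κ] (Y : Matrix (Fin m) κ ℝ) :
    eigList Y = List.ofFn (isHermitian_mul_conjTranspose_self Y).eigenvalues₀ := by
  refine List.Perm.eq_of_sortedGE ?_ (IsHermitian.eigenvalues₀_antitone _).sortedGE_ofFn ?_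
  · exact (Multiset.pairwise_sort _ _).sortedLE.reverse
  · rw [← Multiset.coe_eq_coe, eigList, Multiset.coe_reverse, Multiset.sort_eq]
    rw [← Fin.univ_val_map, ← Multiset.map_univ_val_equiv
      (Fintype.equivOfCardEq (Fintype.card_fin (Fintype.card (Fin m)))).symm, Multiset.map_map]
    rfl

lemma exists_isSpectralGap_of_sval_lt {m r : ℕ} {κ : Type*} [Fintype κ] {Y : Matrix (Fin m) κ ℝ}
    (hr : r ≤ m) (h : sval Y (r + 1) < sval Y r) :
    ∃ Q ∈ grassmannian (Fin m) r, ∃ l u, IsSpectralGap Q (Y * Yᵀ) l u := by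
  obtain ⟨s, rfl⟩ : ∃ s, r = s + 1 :=
    Nat.exists_eq_succ_of_ne_zero (by rintro rfl; simp [sval] at h)
  have hY := isHermitian_mul_conjTranspose_self Y
  have hlt : (eigList Y).getD (s + 1) 0 < (eigList Y).getD s 0 := lt_of_not_ge fun hle =>
    h.not_ge (Real.sqrt_le_sqrt hle)
  rw [eigList_eq_ofFn] at hlt
  have hr' : s + 1 ≤ Fintype.card (Fin m) := by rwa [Fintype.card_fin]
  have hgetD (i : Fin (Fintype.card (Fin m))) :
      (List.ofFn hY.eigenvalues₀).getD i 0 = hY.eigenvalues₀ i := by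
    rw [List.getD_eq_getElem _ _ (by simpa using i.2), List.getElem_ofFn]
  obtain ⟨Q, hQ, hgap⟩ := exists_isSpectralGap_of_eigenvalues₀ hY hr' hlt
    (fun i hi => by
      rw [hgetD ⟨s, hr'⟩]
      exact hY.eigenvalues₀_antitone (Nat.le_of_lt_succ hi))
    (fun i hi => by
      rw [hgetD ⟨s + 1, hi.trans_lt i.2⟩]
      exact hY.eigenvalues₀_antitone hi)
  exact ⟨Q, hQ, _, _, hgap⟩

end SpectralDecomposition

section Smoothstep

/-- The cubic `3a² − 2a³`. It fixes idempotents, and its derivative at an idempotent kills the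
directions normal to the set of idempotents (`hasDerivAt_smoothstep`), so precomposing with it turns
a Euclidean gradient at a projection into a gradient along the Grassmannian. -/
def smoothstep {R : Type*} [Ring R] (a : R) : R := 3 * a ^ 2 - 2 * a ^ 3

/-- The projection of `e` onto the tangent space to the set of idempotents at `a`. -/
def tangentProj {R : Type*} [Ring R] (a e : R) : R := e * a + a * e - 2 * (a * e * a)

lemma smoothstep_of_isIdempotentElem {R : Type*} [Ring R] {a : R} (ha : IsIdempotentElem a) :
    smoothstep a = a := by
  rw [smoothstep, ha.pow_succ_eq 1, ha.pow_succ_eq 2, ← sub_mul]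
  norm_num

lemma map_smoothstep {R R' : Type*} [Ring R] [Ring R'] (f : R →+* R') (a : R) :
    f (smoothstep a) = smoothstep (f a) := by
  simp only [smoothstep, map_sub, map_mul, map_pow, map_ofNat]

lemma hasDerivAt_smoothstep {R : Type*} [NormedRing R] [NormedAlgebra ℝ R] {a : R}
    (ha : IsIdempotentElem a) (e : R) :
    HasDerivAt (fun s : ℝ => smoothstep (a + s • e)) (tangentProj a e) 0 := by
  have hline : HasDerivAt (fun s : ℝ => a + s • e) e 0 := by
    simpa using ((hasDerivAt_id (0 : ℝ)).smul_const e).const_add a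
  have hsq := hline.mul hline
  have h := (hsq.const_mul 3).sub ((hsq.mul hline).const_mul 2)
  refine (h.congr_deriv ?_).congr_of_eventuallyEq (.of_forall fun s => ?_)
  · simp only [tangentProj, Pi.mul_apply, zero_smul, add_zero, ha.eq, add_mul, mul_assoc]
    noncomm_ring
  · simp only [smoothstep, pow_succ, pow_zero, one_mul, Pi.mul_apply, Pi.sub_apply]

lemma trace_tangentProj_mul {ι : Type*} [Fintype ι] [DecidableEq ι] {P S : Matrix ι ι ℝ}
    (hP : IsIdempotentElem P) (hS : Commute P S) (E : Matrix ι ι ℝ) :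
    (tangentProj P E * S).trace = 0 := by
  have hPE : (P * E * S).trace = (E * P * S).trace := by
    rw [mul_assoc, trace_mul_comm, mul_assoc, ← hS.eq, mul_assoc]
  have hPEP : (P * E * P * S).trace = (E * P * S).trace := by
    rw [mul_assoc, mul_assoc, trace_mul_comm, hS.eq, mul_assoc, mul_assoc, hP.eq, ← hS.eq,
      mul_assoc]
  rw [tangentProj, sub_mul, add_mul, trace_sub, trace_add, hPE, mul_assoc 2, two_mul, trace_add,
    hPEP, sub_self]

end Smoothstep

section PolynomialDerivative

open MvPolynomial

lemma hasDerivAt_eval_add_smul_single {σ : Type*} [DecidableEq σ] (p : MvPolynomial σ ℝ)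
    (x : σ → ℝ) (j : σ) :
    HasDerivAt (fun s : ℝ => eval (x + s • Pi.single j 1) p) (eval x (pderiv j p)) 0 := by
  induction p using MvPolynomial.induction_on with
  | C a => simpa using hasDerivAt_const (0 : ℝ) a
  | add p q hp hq =>
    simp only [map_add]
    exact hp.add hq
  | mul_X p i hp =>
    have hX : HasDerivAt (fun s : ℝ => x i + s * Pi.single (M := fun _ => ℝ) j 1 i)
        (Pi.single (M := fun _ => ℝ) j 1 i) 0 := by
      simpa using ((hasDerivAt_id (0 : ℝ)).mul_const _).const_add (x i)
    refine ((hp.mul hX).congr_deriv ?_).congr_of_eventuallyEq (.of_forall fun s => ?_)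
    · rcases eq_or_ne i j with rfl | hij
      · simp [add_comm, mul_comm]
      · simp [pderiv_X_of_ne hij, hij, mul_comm]
    · simp

end PolynomialDerivative

section MultilinearOnMatrices

variable {η : Type*} {κ : η → Type*} [∀ n, Fintype (κ n)] [∀ n, DecidableEq (κ n)]
  (F : MultilinearMap ℝ (fun n => Matrix (κ n) (κ n) ℝ) ℝ)

/-- The entries of a tuple of matrices, as a point of the affine space on which polynomials in these
entries are evaluated. -/
def entries (M : ∀ n, Matrix (κ n) (κ n) ℝ) (x : Σ n, κ n × κ n) : ℝ := M x.1 x.2.1 x.2.2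

open scoped Matrix.Norms.Frobenius

lemma eval_entries_of_isIdempotentElem {p : MvPolynomial (Σ n, κ n × κ n) ℝ}
    (hp : ∀ M, MvPolynomial.eval (entries M) p = F (fun n => smoothstep (M n)))
    {M : ∀ n, Matrix (κ n) (κ n) ℝ} (hM : ∀ n, IsIdempotentElem (M n)) :
    MvPolynomial.eval (entries M) p = F M := by
  simp only [hp, fun n => smoothstep_of_isIdempotentElem (hM n)]

lemma eval_entries_pderiv [DecidableEq η] {p : MvPolynomial (Σ n, κ n × κ n) ℝ}
    (hp : ∀ M, MvPolynomial.eval (entries M) p = F (fun n => smoothstep (M n)))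
    {M : ∀ n, Matrix (κ n) (κ n) ℝ} (hM : ∀ n, IsIdempotentElem (M n)) (n : η) (i j : κ n) :
    MvPolynomial.eval (entries M) (MvPolynomial.pderiv ⟨n, i, j⟩ p) =
      F (Function.update M n (tangentProj (M n) (single i j 1))) := by
  have hentries (s : ℝ) : entries M + s • Pi.single ⟨n, i, j⟩ 1 =
      entries (Function.update M n (M n + s • single i j 1)) := by
    ext ⟨m, a, b⟩
    rcases eq_or_ne m n with rfl | hmn
    · simp [entries, Pi.single_apply, single_apply, eq_comm]
    · simp [entries, hmn]
  have hsmooth (s : ℝ) : MvPolynomial.eval (entries M + s • Pi.single ⟨n, i, j⟩ 1) p =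
      F (Function.update M n (smoothstep (M n + s • single i j 1))) := by
    rw [hentries, hp]
    congr 1
    ext1 m
    by_cases h : m = n
    · subst h; simp
    · simp [h, smoothstep_of_isIdempotentElem (hM m)]
  refine (hasDerivAt_eval_add_smul_single p (entries M) ⟨n, i, j⟩).unique ?_
  simp only [hsmooth]
  exact (LinearMap.toContinuousLinearMap (F.toLinearMap M n)).hasFDerivAt.comp_hasDerivAt 0
    (hasDerivAt_smoothstep (hM n) (single i j 1))

lemma multilinear_apply_eq_sum [Fintype η] [DecidableEq η] (M : ∀ n, Matrix (κ n) (κ n) ℝ) :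
    F M = ∑ i : ∀ n, κ n × κ n, (∏ n, M n (i n).1 (i n).2) *
      F (fun n => single (i n).1 (i n).2 1) := by
  calc F M = F fun n => ∑ i : κ n × κ n, M n i.1 i.2 • single i.1 i.2 1 := by
        congr 1
        ext1 n
        rw [Fintype.sum_prod_type]
        simpa using matrix_eq_sum_single (M n)
    _ = _ := by
        rw [F.map_sum]
        exact Finset.sum_congr rfl fun i _ => F.map_smul_univ _ _

lemma exists_mvPolynomial_eval_entries [Finite η] : ∃ p : MvPolynomial (Σ n, κ n × κ n) ℝ,
    ∀ M, MvPolynomial.eval (entries M) p = F (fun n => smoothstep (M n)) := by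
  classical
  have := Fintype.ofFinite η
  let G (n) : Matrix (κ n) (κ n) (MvPolynomial (Σ n, κ n × κ n) ℝ) :=
    of fun i j => MvPolynomial.X ⟨n, i, j⟩
  refine ⟨∑ i : ∀ n, κ n × κ n, (∏ n, smoothstep (G n) (i n).1 (i n).2) *
      MvPolynomial.C (F (fun n => single (i n).1 (i n).2 1)), fun M => ?_⟩
  have hG (n i j) :
      MvPolynomial.eval (entries M) (smoothstep (G n) i j) = smoothstep (M n) i j := by
    have h := map_smoothstep (MvPolynomial.eval (entries M)).mapMatrix (G n)
    have hM : (MvPolynomial.eval (entries M)).mapMatrix (G n) = M n := by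
      ext i j
      simp [G, entries]
    rw [hM] at h
    exact congrFun (congrFun h i) j
  rw [multilinear_apply_eq_sum]
  simp only [map_sum, map_mul, map_prod, hG, MvPolynomial.eval_C]

end MultilinearOnMatrices

section Smoothness

open scoped Matrix.Norms.Frobenius

variable {η : Type*} [Fintype η] {κ : η → Type*} [∀ n, Fintype (κ n)]
  (F : MultilinearMap ℝ (fun n => Matrix (κ n) (κ n) ℝ) ℝ)

lemma contDiff_multilinear {k : WithTop ℕ∞} : ContDiff ℝ k F := by
  classical
  rw [show ⇑F = _ from funext (multilinear_apply_eq_sum F)]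
  refine ContDiff.sum fun i _ => ContDiff.mul (contDiff_prod fun n _ => ?_) contDiff_const
  let block : (∀ n, Matrix (κ n) (κ n) ℝ) →ₗ[ℝ] Matrix (κ n) (κ n) ℝ := LinearMap.proj n
  exact (LinearMap.toContinuousLinearMap
    (entryLinearMap ℝ ℝ (i n).1 (i n).2 ∘ₗ block)).contDiff

lemma contDiff_apply_update [DecidableEq η] (n : η) :
    ContDiff ℝ 1 fun x : (∀ n, Matrix (κ n) (κ n) ℝ) × Matrix (κ n) (κ n) ℝ =>
      F (Function.update x.1 n x.2) := by
  refine (contDiff_multilinear F).comp (contDiff_pi.mpr fun m => ?_)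
  rcases eq_or_ne m n with rfl | hmn
  · simpa using contDiff_snd
  · simpa [hmn] using contDiff_pi.mp contDiff_fst m

end Smoothness

section PartialGradient

open scoped Matrix.Norms.Frobenius

variable {η : Type*} [DecidableEq η] {κ : η → Type*} [∀ n, DecidableEq (κ n)]
  (F : MultilinearMap ℝ (fun n => Matrix (κ n) (κ n) ℝ) ℝ)

/-- The matrix representing the linear form `Q ↦ F (Function.update M n Q)` in the trace pairing
(`trace_mul_partialGradient`). -/
def partialGradient (M : ∀ n, Matrix (κ n) (κ n) ℝ) (n : η) : Matrix (κ n) (κ n) ℝ :=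
  of fun i j => F (Function.update M n (single j i 1))

lemma isHermitian_partialGradient (hF : ∀ M, F (fun n => (M n)ᵀ) = F M)
    {M : ∀ n, Matrix (κ n) (κ n) ℝ} (hM : ∀ n, (M n).IsHermitian) (n : η) :
    (partialGradient F M n).IsHermitian := by
  ext i j
  rw [conjTranspose_apply, star_trivial, partialGradient, of_apply, of_apply, ← hF]
  congr 1
  ext1 m
  rcases eq_or_ne m n with rfl | hmn
  · simp
  · simpa [hmn] using (hM m).eq

lemma trace_mul_partialGradient [∀ n, Fintype (κ n)] (M : ∀ n, Matrix (κ n) (κ n) ℝ) (n : η)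
    (Q : Matrix (κ n) (κ n) ℝ) :
    (Q * partialGradient F M n).trace = F (Function.update M n Q) := by
  calc (Q * partialGradient F M n).trace
      = ∑ i, ∑ j, Q i j * F.toLinearMap M n (single i j 1) := by
        simp [trace, mul_apply, partialGradient]
    _ = F.toLinearMap M n (∑ i, ∑ j, single i j (Q i j)) := by
        simp only [map_sum, ← smul_eq_mul, ← map_smul, smul_single]
        simp only [smul_eq_mul, mul_one]
    _ = F (Function.update M n Q) := by
        rw [← matrix_eq_sum_single, MultilinearMap.toLinearMap_apply]

lemma continuous_partialGradient [Finite η] [∀ n, Finite (κ n)] (n : η) :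
    Continuous fun M => partialGradient F M n := by
  have := Fintype.ofFinite η
  have : ∀ n, Fintype (κ n) := fun n => .ofFinite _
  refine continuous_matrix fun i j => ?_
  exact (contDiff_multilinear F (k := 0)).continuous.comp (continuous_id.update n continuous_const)

end PartialGradient

section Sweep

variable {N : ℕ} {α : Fin N → Type*}

/-- The tuple reached after the first `j` steps of a sweep that replaces the blocks of `P` by those
of `P'` one after the other. -/
def sweep (P P' : ∀ n, α n) (j : ℕ) (n : Fin N) : α n := if n < j then P' n else P n

variable (P P' : ∀ n, α n)

lemma sweep_zero : sweep P P' 0 = P := by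
  ext n
  simp [sweep]

lemma sweep_last : sweep P P' N = P' := by
  ext n
  simp [sweep]

lemma sweep_succ (n : Fin N) :
    sweep P P' (n + 1) = Function.update (sweep P P' n) n (P' n) := by
  ext m
  rcases lt_trichotomy (m : ℕ) n with h | h | h
  · simp [sweep, Fin.ne_of_lt h, h, h.trans (Nat.lt_succ_self _)]
  · obtain rfl := Fin.ext h
    simp [sweep]
  · simp [sweep, Fin.ne_of_gt h, h.not_gt, Nat.not_lt.mpr (Nat.succ_le_of_lt h)]

lemma update_sweep_eq_self (n : Fin N) :
    Function.update (sweep P P' n) n (P n) = sweep P P' n := by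
  simp [sweep]

lemma dist_sweep_le [∀ n, PseudoMetricSpace (α n)] (j : ℕ) :
    dist P' (sweep P P' j) ≤ dist P' P := by
  refine (dist_pi_le_iff dist_nonneg).mpr fun n => ?_
  rw [sweep]
  split_ifs
  · rw [dist_self]
    exact dist_nonneg
  · exact dist_le_pi_dist P' P n

end Sweep

section BlockAscent

open scoped Matrix.Norms.Frobenius
open Topology

lemma tendsto_atTop_of_monotone_of_mapClusterPt {f : ℕ → ℝ} {a : ℝ} (hf : Monotone f)
    (ha : MapClusterPt a atTop f) : Tendsto f atTop (𝓝 a) := by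
  obtain ⟨ψ, hψ, hlim⟩ := ha.tendsto_subseq
  exact (tendsto_iff_tendsto_subseq_of_monotone hf hψ.tendsto_atTop).mpr hlim

variable {N : ℕ} {κ : Fin N → Type*} [∀ n, Fintype (κ n)]

/-- `P` is produced by cyclic block coordinate ascent for `F` over tuples of projections of ranks
`r n`: each new block maximizes `F` with the other blocks at their current values. -/
structure IsBlockAscent (F : MultilinearMap ℝ (fun n => Matrix (κ n) (κ n) ℝ) ℝ) (r : Fin N → ℕ)
    (P : ℕ → ∀ n, Matrix (κ n) (κ n) ℝ) : Prop where
  mem (k : ℕ) (n : Fin N) : P k n ∈ grassmannian (κ n) (r n)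
  isMaxOn (k : ℕ) (n : Fin N) :
    IsMaxOn (fun Q => F (Function.update (sweep (P k) (P (k + 1)) n) n Q))
      (grassmannian (κ n) (r n)) (P (k + 1) n)

/-- `B` is a limit point of `P` and each block of the gradient of `F` at `B` has a gap after its
`r n` largest eigenvalues, so that it has only one maximizing projection of rank `r n`. -/
structure IsNondegenerateLimitPt [∀ n, DecidableEq (κ n)]
    (F : MultilinearMap ℝ (fun n => Matrix (κ n) (κ n) ℝ) ℝ) (r : Fin N → ℕ)
    (P : ℕ → ∀ n, Matrix (κ n) (κ n) ℝ) (B : ∀ n, Matrix (κ n) (κ n) ℝ) : Prop where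
  mapClusterPt : MapClusterPt B atTop P
  mem (n : Fin N) : B n ∈ grassmannian (κ n) (r n)
  exists_isSpectralGap (n : Fin N) :
    ∃ Q ∈ grassmannian (κ n) (r n), ∃ l u, IsSpectralGap Q (partialGradient F B n) l u

namespace IsBlockAscent

variable {F : MultilinearMap ℝ (fun n => Matrix (κ n) (κ n) ℝ) ℝ} {r : Fin N → ℕ}
  {P : ℕ → ∀ n, Matrix (κ n) (κ n) ℝ} {B : ∀ n, Matrix (κ n) (κ n) ℝ}

lemma monotone_apply_sweep (h : IsBlockAscent F r P) (k : ℕ) :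
    Monotone fun j => F (sweep (P k) (P (k + 1)) j) := by
  refine monotone_nat_of_le_succ fun j => ?_
  rcases lt_or_ge j N with hj | hj
  · obtain ⟨n, rfl⟩ : ∃ n : Fin N, (n : ℕ) = j := ⟨⟨j, hj⟩, rfl⟩
    simpa only [Set.mem_ofPred_eq, update_sweep_eq_self, ← sweep_succ] using
      h.isMaxOn k n (h.mem k n)
  · have hsweep : sweep (P k) (P (k + 1)) (j + 1) = sweep (P k) (P (k + 1)) j := by
      ext1 n
      simp [sweep, n.2.trans_le hj, (n.2.trans_le hj).trans (Nat.lt_succ_self j)]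
    simp only [hsweep, le_refl]

lemma le_apply_sweep (h : IsBlockAscent F r P) (k j : ℕ) :
    F (P k) ≤ F (sweep (P k) (P (k + 1)) j) := by
  simpa only [sweep_zero] using h.monotone_apply_sweep k (Nat.zero_le j)

lemma apply_sweep_le (h : IsBlockAscent F r P) (k : ℕ) {j : ℕ} (hj : j ≤ N) :
    F (sweep (P k) (P (k + 1)) j) ≤ F (P (k + 1)) := by
  simpa only [sweep_last] using h.monotone_apply_sweep k hj

lemma monotone_apply (h : IsBlockAscent F r P) : Monotone fun k => F (P k) :=
  monotone_nat_of_le_succ fun k => (h.le_apply_sweep k N).trans (h.apply_sweep_le k le_rfl)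

lemma tendsto_apply (h : IsBlockAscent F r P) (hB : MapClusterPt B atTop P) :
    Tendsto (fun k => F (P k)) atTop (𝓝 (F B)) :=
  tendsto_atTop_of_monotone_of_mapClusterPt h.monotone_apply
    (hB.continuousAt_comp (contDiff_multilinear F (k := 0)).continuous.continuousAt)

lemma isMaxOn_of_tendsto_sweep (h : IsBlockAscent F r P) (hB : MapClusterPt B atTop P)
    {n : Fin N} (hn : Tendsto (fun k => sweep (P k) (P (k + 1)) n) (nearTimes P B) (𝓝 B)) :
    IsMaxOn (fun Q => F (Function.update B n Q)) (grassmannian (κ n) (r n)) (B n) := by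
  intro Q hQ
  have : (nearTimes P B).NeBot := neBot_nearTimes hB
  have hle (k : ℕ) :
      F (Function.update (sweep (P k) (P (k + 1)) n) n Q) ≤ F (P (k + 1)) := by
    refine le_trans ?_ (h.apply_sweep_le k n.2)
    rw [sweep_succ]
    exact h.isMaxOn k n hQ
  have hlhs : Tendsto (fun k => F (Function.update (sweep (P k) (P (k + 1)) n) n Q))
      (nearTimes P B) (𝓝 (F (Function.update B n Q))) :=
    ((contDiff_multilinear F (k := 0)).continuous.tendsto _).comp
      (hn.update n tendsto_const_nhds)
  have hrhs := ((h.tendsto_apply hB).comp (tendsto_add_atTop_nat 1)).mono_left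
    (nearTimes_le_atTop (p := P) (q := B))
  simpa only [Set.mem_ofPred_eq, Function.update_eq_self] using
    le_of_tendsto_of_tendsto' hlhs hrhs hle

variable [∀ n, DecidableEq (κ n)]

lemma isMaxOn_trace_mul (h : IsBlockAscent F r P) (k : ℕ) (n : Fin N) :
    IsMaxOn (fun Q => (Q * partialGradient F (sweep (P k) (P (k + 1)) n) n).trace)
      (grassmannian (κ n) (r n)) (P (k + 1) n) := by
  simpa only [trace_mul_partialGradient] using h.isMaxOn k n

lemma tendsto_succ_of_tendsto_sweep (h : IsBlockAscent F r P) {n : Fin N} {l u : ℝ}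
    (hBn : B n ∈ grassmannian (κ n) (r n))
    (hgap : IsSpectralGap (B n) (partialGradient F B n) l u)
    (hn : Tendsto (fun k => sweep (P k) (P (k + 1)) n) (nearTimes P B) (𝓝 B)) :
    Tendsto (fun k => P (k + 1) n) (nearTimes P B) (𝓝 (B n)) := by
  have hgrad := ((continuous_partialGradient F n).tendsto B).comp hn
  refine tendsto_iff_norm_sub_tendsto_zero.mpr (squeeze_zero (fun _ => norm_nonneg _)
    (fun k => hgap.norm_sub_le_of_isMaxOn hBn (h.mem (k + 1) n) (h.isMaxOn_trace_mul k n)) ?_)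
  simpa using (tendsto_iff_norm_sub_tendsto_zero.mp hgrad).const_mul (2 / (l - u))

lemma exists_isSpectralGap_of_tendsto_sweep (h : IsBlockAscent F r P)
    (hB : IsNondegenerateLimitPt F r P B) {n : Fin N}
    (hn : Tendsto (fun k => sweep (P k) (P (k + 1)) n) (nearTimes P B) (𝓝 B)) :
    ∃ l u, IsSpectralGap (B n) (partialGradient F B n) l u := by
  obtain ⟨Q, hQ, l, u, hgap⟩ := hB.exists_isSpectralGap n
  have hmax := h.isMaxOn_of_tendsto_sweep hB.mapClusterPt hn
  simp only [← trace_mul_partialGradient] at hmax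
  exact ⟨l, u, (hgap.eq_of_isMaxOn hQ (hB.mem n) hmax).symm ▸ hgap⟩

lemma tendsto_sweep (h : IsBlockAscent F r P) (hB : IsNondegenerateLimitPt F r P B) {j : ℕ}
    (hj : j ≤ N) : Tendsto (fun k => sweep (P k) (P (k + 1)) j) (nearTimes P B) (𝓝 B) := by
  induction j with
  | zero =>
    simp only [sweep_zero]
    exact tendsto_nearTimes
  | succ j ih =>
    obtain ⟨n, rfl⟩ : ∃ n : Fin N, (n : ℕ) = j := ⟨⟨j, hj⟩, rfl⟩
    have hn := ih n.2.le
    obtain ⟨l, u, hgap⟩ := h.exists_isSpectralGap_of_tendsto_sweep hB hn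
    simpa only [sweep_succ, Function.update_eq_self] using
      hn.update n (h.tendsto_succ_of_tendsto_sweep (hB.mem n) hgap hn)

lemma tendsto_succ (h : IsBlockAscent F r P) (hB : IsNondegenerateLimitPt F r P B) :
    Tendsto (fun k => P (k + 1)) (nearTimes P B) (𝓝 B) := by
  simpa only [sweep_last] using h.tendsto_sweep hB le_rfl

theorem isMaxOn_of_isNondegenerateLimitPt (h : IsBlockAscent F r P)
    (hB : IsNondegenerateLimitPt F r P B) (n : Fin N) :
    IsMaxOn (fun Q => F (Function.update B n Q)) (grassmannian (κ n) (r n)) (B n) :=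
  h.isMaxOn_of_tendsto_sweep hB.mapClusterPt (h.tendsto_sweep hB n.2.le)

lemma isHermitian_partialGradient_sweep (h : IsBlockAscent F r P)
    (hF : ∀ M, F (fun n => (M n)ᵀ) = F M) (k : ℕ) (n : Fin N) :
    (partialGradient F (sweep (P k) (P (k + 1)) n) n).IsHermitian := by
  refine isHermitian_partialGradient F hF (fun m => ?_) n
  rw [sweep]
  split_ifs
  · exact (isStarProjection_of_mem_grassmannian (h.mem (k + 1) m)).isSelfAdjoint
  · exact (isStarProjection_of_mem_grassmannian (h.mem k m)).isSelfAdjoint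

lemma commute_partialGradient_sweep (h : IsBlockAscent F r P)
    (hF : ∀ M, F (fun n => (M n)ᵀ) = F M) (k : ℕ) (n : Fin N) :
    Commute (P (k + 1) n) (partialGradient F (sweep (P k) (P (k + 1)) n) n) :=
  commute_of_isMaxOn_trace_mul (h.mem (k + 1) n)
    (h.isHermitian_partialGradient_sweep hF k n) (h.isMaxOn_trace_mul k n)

lemma exists_mul_dist_block_sq_le (h : IsBlockAscent F r P) (hB : IsNondegenerateLimitPt F r P B)
    (hF : ∀ M, F (fun n => (M n)ᵀ) = F M) (n : Fin N) :
    ∃ c > 0, ∀ᶠ k in nearTimes P B,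
      c * dist (P (k + 1) n) (P k n) ^ 2 ≤ F (P (k + 1)) - F (P k) := by
  obtain ⟨l, u, hgap⟩ :=
    h.exists_isSpectralGap_of_tendsto_sweep hB (h.tendsto_sweep hB n.2.le)
  have hlt := hgap.lt
  have hη : 0 < (l - u) / 4 := by linarith
  have hη' : u + (l - u) / 4 < l - (l - u) / 4 := by linarith
  have hgrad : Tendsto (fun k => partialGradient F (sweep (P k) (P (k + 1)) n) n)
      (nearTimes P B) (𝓝 (partialGradient F B n)) :=
    ((continuous_partialGradient F n).tendsto B).comp (h.tendsto_sweep hB n.2.le)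
  have hblock : Tendsto (fun k => P (k + 1) n) (nearTimes P B) (𝓝 (B n)) :=
    (h.tendsto_succ hB).apply_nhds n
  refine ⟨_, half_pos (sub_pos.mpr hη'), ?_⟩
  filter_upwards [(hblock.prodMk_nhds hgrad).eventually (hgap.eventually hη hη')] with k hk
  have hgrowth := (hk (isStarProjection_of_mem_grassmannian (h.mem (k + 1) n))
    (h.isHermitian_partialGradient_sweep hF k n)
    (h.commute_partialGradient_sweep hF k n)).norm_sub_sq_le (h.mem (k + 1) n) (h.mem k n)
  rw [trace_mul_partialGradient, trace_mul_partialGradient, ← sweep_succ, update_sweep_eq_self,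
    ← dist_eq_norm, dist_comm] at hgrowth
  exact hgrowth.trans (sub_le_sub (h.apply_sweep_le k n.2) (h.le_apply_sweep k n))

lemma exists_mul_dist_sq_le (h : IsBlockAscent F r P) (hB : IsNondegenerateLimitPt F r P B)
    (hF : ∀ M, F (fun n => (M n)ᵀ) = F M) :
    ∃ c > 0, ∀ᶠ k in nearTimes P B,
      c * dist (P (k + 1)) (P k) ^ 2 ≤ F (P (k + 1)) - F (P k) := by
  choose c hc hblock using h.exists_mul_dist_block_sq_le hB hF
  obtain ⟨c₀, hle, hc₀⟩ : ∃ c₀, (∀ n, c₀ ≤ c n) ∧ 0 < c₀ :=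
    ((eventually_all.mpr fun n => eventually_nhdsWithin_of_eventually_nhds
      (eventually_le_nhds (hc n))).and (eventually_mem_nhdsWithin (s := Set.Ioi 0))).exists
  refine ⟨c₀, hc₀, ?_⟩
  filter_upwards [eventually_all.mpr hblock] with k hk
  have hnonneg : 0 ≤ F (P (k + 1)) - F (P k) := sub_nonneg.mpr (h.monotone_apply k.le_succ)
  have hdist : dist (P (k + 1)) (P k) ≤ √((F (P (k + 1)) - F (P k)) / c₀) := by
    refine (dist_pi_le_iff (Real.sqrt_nonneg _)).mpr fun n => Real.le_sqrt_of_sq_le ?_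
    rw [le_div_iff₀' hc₀]
    exact (mul_le_mul_of_nonneg_right (hle n) (sq_nonneg _)).trans (hk n)
  have hsq := (Real.le_sqrt dist_nonneg (by positivity)).mp hdist
  rwa [le_div_iff₀' hc₀] at hsq

lemma exists_abs_apply_tangentProj_le (h : IsBlockAscent F r P)
    (hB : IsNondegenerateLimitPt F r P B) (hF : ∀ M, F (fun n => (M n)ᵀ) = F M)
    (n : Fin N) (E : Matrix (κ n) (κ n) ℝ) :
    ∃ C : ℝ, ∀ᶠ k in nearTimes P B,
      |F (Function.update (P (k + 1)) n (tangentProj (P (k + 1) n) E))| ≤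
        C * dist (P (k + 1)) (P k) := by
  obtain ⟨K, t, ht, hLip⟩ := ((contDiff_apply_update F n).contDiffAt
    (x := (B, tangentProj (B n) E))).exists_lipschitzOnWith
  have hcont : Continuous fun Q : Matrix (κ n) (κ n) ℝ => tangentProj Q E := by
    unfold tangentProj
    fun_prop
  have htangent := (hcont.tendsto (B n)).comp ((h.tendsto_succ hB).apply_nhds n)
  refine ⟨K, ?_⟩
  filter_upwards [((h.tendsto_succ hB).prodMk_nhds htangent).eventually ht,
    ((h.tendsto_sweep hB n.2.le).prodMk_nhds htangent).eventually ht] with k hnew hsweep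
  have hzero : F (Function.update (sweep (P k) (P (k + 1)) n) n
      (tangentProj (P (k + 1) n) E)) = 0 := by
    rw [← trace_mul_partialGradient]
    exact trace_tangentProj_mul
      (isStarProjection_of_mem_grassmannian (h.mem (k + 1) n)).isIdempotentElem
      (h.commute_partialGradient_sweep hF k n) E
  have hle := hLip.dist_le_mul _ hnew _ hsweep
  simp only [Function.comp_apply, hzero, Real.dist_eq, sub_zero, Prod.dist_eq, dist_self,
    dist_nonneg, sup_of_le_left] at hle
  exact hle.trans (by gcongr; exact dist_sweep_le _ _ _)

lemma exists_sum_abs_pderiv_le (h : IsBlockAscent F r P) (hB : IsNondegenerateLimitPt F r P B)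
    (hF : ∀ M, F (fun n => (M n)ᵀ) = F M) {p : MvPolynomial (Σ n, κ n × κ n) ℝ}
    (hp : ∀ M, MvPolynomial.eval (entries M) p = F (fun n => smoothstep (M n))) :
    ∃ C : ℝ, ∀ᶠ k in nearTimes P B,
      ∑ x, |MvPolynomial.eval (entries (P (k + 1))) (MvPolynomial.pderiv x p)| ≤
        C * dist (P (k + 1)) (P k) := by
  choose C hC using fun x : Σ n, κ n × κ n =>
    h.exists_abs_apply_tangentProj_le hB hF x.1 (single x.2.1 x.2.2 1)
  refine ⟨∑ x, C x, ?_⟩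
  filter_upwards [eventually_all.mpr hC] with k hk
  rw [Finset.sum_mul]
  refine Finset.sum_le_sum fun x _ => ?_
  rw [eval_entries_pderiv F hp fun m =>
    (isStarProjection_of_mem_grassmannian (h.mem (k + 1) m)).isIdempotentElem]
  exact hk x

lemma exists_sub_apply_pow_le (h : IsBlockAscent F r P) (hB : IsNondegenerateLimitPt F r P B)
    (hF : ∀ M, F (fun n => (M n)ᵀ) = F M) :
    ∃ m : ℕ, ∃ C : ℝ, ∀ᶠ k in nearTimes P B,
      (F B - F (P (k + 1))) ^ (m + 1) ≤ C * dist (P (k + 1)) (P k) ^ (m + 2) := by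
  obtain ⟨p, hp⟩ := exists_mvPolynomial_eval_entries F
  obtain ⟨m, K, hloj⟩ := lojasiewicz p (entries B)
  obtain ⟨C, hC⟩ := h.exists_sum_abs_pderiv_le hB hF hp
  have hentries : Continuous (entries (κ := κ)) :=
    continuous_pi fun x => ((continuous_apply x.1).matrix_elem x.2.1 x.2.2)
  have hnear := (hentries.tendsto B).comp (h.tendsto_succ hB)
  refine ⟨m, |K| * C ^ (m + 2), ?_⟩
  filter_upwards [hC, hnear.eventually hloj] with k hgrad hlojk
  have hidem {n Q} (hQ : Q ∈ grassmannian (κ n) (r n)) : IsIdempotentElem Q :=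
    (isStarProjection_of_mem_grassmannian hQ).isIdempotentElem
  rw [Function.comp_apply, eval_entries_of_isIdempotentElem F hp fun n => hidem (h.mem (k + 1) n),
    eval_entries_of_isIdempotentElem F hp fun n => hidem (hB.mem n), abs_sub_comm] at hlojk
  calc (F B - F (P (k + 1))) ^ (m + 1)
      ≤ |F B - F (P (k + 1))| ^ (m + 1) := by rw [← abs_pow]; exact le_abs_self _
    _ ≤ K * (∑ x, |MvPolynomial.eval (entries (P (k + 1))) (MvPolynomial.pderiv x p)|) ^ (m + 2) :=
        hlojk
    _ ≤ |K| * (C * dist (P (k + 1)) (P k)) ^ (m + 2) := by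
        gcongr
        exact le_abs_self K
    _ = |K| * C ^ (m + 2) * dist (P (k + 1)) (P k) ^ (m + 2) := by ring

theorem tendsto_of_isNondegenerateLimitPt (h : IsBlockAscent F r P)
    (hB : IsNondegenerateLimitPt F r P B) (hF : ∀ M, F (fun n => (M n)ᵀ) = F M) :
    Tendsto P atTop (𝓝 B) := by
  obtain ⟨c, hc, hdecr⟩ := h.exists_mul_dist_sq_le hB hF
  obtain ⟨m, C, hloj⟩ := h.exists_sub_apply_pow_le hB hF
  refine tendsto_of_sufficient_decrease_of_lojasiewicz (Δ := fun k => F B - F (P k))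
    hB.mapClusterPt (fun _ _ hk => sub_le_sub_left (h.monotone_apply hk) _) ?_ hc
    (h.tendsto_succ hB) ?_ hloj
  · simpa using (h.tendsto_apply hB.mapClusterPt).const_sub (F B)
  · simp only [sub_sub_sub_cancel_left]
    exact hdecr

end IsBlockAscent

end BlockAscent

section TensorForm

variable {η : Type*} [Fintype η] {ι : η → Type*} [∀ n, Fintype (ι n)] [DecidableEq η]

/-- The multilinear form `M ↦ ⟨X, X ×₁ M₁ ⋯ ×_N M_N⟩`; at `Mₙ = AₙAₙᵀ` its value is `f(A)`. -/
def tensorForm (X : (∀ n, ι n) → ℝ) : MultilinearMap ℝ (fun n => Matrix (ι n) (ι n) ℝ) ℝ :=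
  ∑ i, ∑ j, (X i * X j) •
    (MultilinearMap.mkPiAlgebra ℝ η ℝ).compLinearMap fun n => entryLinearMap ℝ ℝ (i n) (j n)

lemma tensorForm_apply (X : (∀ n, ι n) → ℝ) (M : ∀ n, Matrix (ι n) (ι n) ℝ) :
    tensorForm X M = ∑ i, ∑ j, X i * X j * ∏ n, M n (i n) (j n) := by
  simp [tensorForm]

lemma tensorForm_transpose (X : (∀ n, ι n) → ℝ) (M : ∀ n, Matrix (ι n) (ι n) ℝ) :
    tensorForm X (fun n => (M n)ᵀ) = tensorForm X M := by
  rw [tensorForm_apply, tensorForm_apply, Finset.sum_comm]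
  exact Finset.sum_congr rfl fun i _ => Finset.sum_congr rfl fun j _ => by
    rw [mul_comm (X j)]
    rfl

lemma partialGradient_tensorForm_apply [∀ n, DecidableEq (ι n)] (X : (∀ n, ι n) → ℝ)
    (M : ∀ n, Matrix (ι n) (ι n) ℝ) (n : η) (a b : ι n) :
    partialGradient (tensorForm X) M n a b = ∑ i, ∑ j,
      X ((Equiv.piSplitAt n ι).symm (b, i)) * X ((Equiv.piSplitAt n ι).symm (a, j)) *
        ∏ m : {m // m ≠ n}, M m (i m) (j m) := by
  have hprod (x y : ι n) (i j : ∀ m : {m // m ≠ n}, ι m) :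
      ∏ m, Function.update M n (single b a 1) m ((Equiv.piSplitAt n ι).symm (x, i) m)
        ((Equiv.piSplitAt n ι).symm (y, j) m) =
      single b a 1 x y * ∏ m : {m // m ≠ n}, M m (i m) (j m) := by
    rw [Fintype.prod_eq_mul_prod_subtype_ne _ n]
    congr 1
    · simp
    · refine Finset.prod_congr rfl fun m _ => ?_
      simp [m.2]
  rw [partialGradient, of_apply, tensorForm_apply]
  simp only [← (Equiv.piSplitAt n ι).symm.sum_comp, hprod, Fintype.sum_prod_type]
  simp [single_apply, ite_and, Finset.sum_ite_irrel]

end TensorForm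

section Tucker
open scoped Matrix.Norms.Frobenius
open Topology

lemma froSq_eq_norm_sq {ι κ : Type*} [Fintype ι] [Fintype κ] (M : Matrix ι κ ℝ) :
    froSq M = ‖M‖ ^ 2 := by
  rw [frobenius_norm_def, ← Real.sqrt_eq_rpow, Real.sq_sqrt (by positivity)]
  simp [froSq]

lemma fro_eq_norm {ι κ : Type*} [Fintype ι] [Fintype κ] (M : Matrix ι κ ℝ) : fro M = ‖M‖ := by
  rw [fro, froSq_eq_norm_sq, Real.sqrt_sq (norm_nonneg M)]

lemma tendsto_fro_sub_iff {α ι κ : Type*} [Fintype ι] [Fintype κ] {l : Filter α}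
    {M : α → Matrix ι κ ℝ} {L : Matrix ι κ ℝ} :
    Tendsto (fun a => fro (M a - L)) l (𝓝 0) ↔ Tendsto M l (𝓝 L) := by
  simp only [fro_eq_norm]
  exact tendsto_iff_norm_sub_tendsto_zero.symm

lemma froSq_transpose_mul {ι κ τ : Type*} [Fintype ι] [Fintype κ] [Fintype τ] (B : Matrix ι κ ℝ)
    (G : Matrix ι τ ℝ) : froSq (Bᵀ * G) = (B * Bᵀ * (G * Gᵀ)).trace := by
  rw [froSq_eq_norm_sq, ← frobenius_norm_transpose, frobenius_norm_sq_eq_trace, transpose_transpose,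
    transpose_mul, transpose_transpose, Matrix.mul_assoc B, trace_mul_comm B]
  simp only [Matrix.mul_assoc]

variable {N : ℕ} {I r : Fin N → ℕ} (X : (∀ n, Fin (I n)) → ℝ)

lemma Gmat_apply (A : ∀ n, Matrix (Fin (I n)) (Fin (r n)) ℝ) (n : Fin N) (a : Fin (I n))
    (c : ∀ m : {m // m ≠ n}, Fin (r m)) :
    Gmat X A n a c = ∑ i, X ((Equiv.piSplitAt n fun n => Fin (I n)).symm (a, i)) *
      ∏ m : {m // m ≠ n}, A m (i m) (c m) := by
  refine Finset.sum_congr rfl fun i _ => ?_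
  congr 2
  ext1 m
  rw [Equiv.piSplitAt_symm_apply]
  split_ifs with h
  · subst h; rfl
  · rfl

lemma partialGradient_tensorForm (A : ∀ n, Matrix (Fin (I n)) (Fin (r n)) ℝ) (n : Fin N) :
    partialGradient (tensorForm X) (fun n => A n * (A n)ᵀ) n = Gmat X A n * (Gmat X A n)ᵀ := by
  ext a b
  simp only [partialGradient_tensorForm_apply, mul_apply, transpose_apply, Gmat_apply,
    Finset.sum_mul_sum]
  simp only [Finset.prod_univ_sum, Fintype.piFinset_univ, Finset.mul_sum]
  rw [Finset.sum_comm, Finset.sum_comm_cycle]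
  refine Finset.sum_congr rfl fun c _ => Finset.sum_congr rfl fun i _ =>
    Finset.sum_congr rfl fun j _ => ?_
  rw [Finset.prod_mul_distrib]
  ring

lemma froSq_transpose_mul_Gmat (A : ∀ n, Matrix (Fin (I n)) (Fin (r n)) ℝ) (n : Fin N)
    (B : Matrix (Fin (I n)) (Fin (r n)) ℝ) :
    froSq (Bᵀ * Gmat X A n) =
      tensorForm X (Function.update (fun n => A n * (A n)ᵀ) n (B * Bᵀ)) := by
  rw [froSq_transpose_mul, ← partialGradient_tensorForm]
  exact trace_mul_partialGradient (tensorForm X) _ n _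

lemma isMaxOn_tensorForm_iff (A : ∀ n, Matrix (Fin (I n)) (Fin (r n)) ℝ) (n : Fin N)
    (B : Matrix (Fin (I n)) (Fin (r n)) ℝ) :
    IsMaxOn (fun Q => tensorForm X (Function.update (fun n => A n * (A n)ᵀ) n Q))
        (grassmannian (Fin (I n)) (r n)) (B * Bᵀ) ↔
      ∀ C : Matrix (Fin (I n)) (Fin (r n)) ℝ, Cᵀ * C = 1 →
        froSq (Cᵀ * Gmat X A n) ≤ froSq (Bᵀ * Gmat X A n) := by
  simp only [froSq_transpose_mul_Gmat]
  refine ⟨fun h C hC => h ⟨C, hC, rfl⟩, ?_⟩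
  rintro h _ ⟨C, hC, rfl⟩
  exact h C hC

variable {X}

lemma BlockMax.critical {A : ∀ n, Matrix (Fin (I n)) (Fin (r n)) ℝ} (h : BlockMax X A)
    (hA : TFeas A) : Critical X A := by
  intro n
  have hmax := (isMaxOn_tensorForm_iff X A n (A n)).mpr (h n)
  simp only [← trace_mul_partialGradient, partialGradient_tensorForm] at hmax
  have hcomm := commute_of_isMaxOn_trace_mul ⟨A n, hA n, rfl⟩
    (isHermitian_mul_conjTranspose_self _) hmax
  rw [conjTranspose_eq_transpose_of_trivial] at hcomm
  calc Gmat X A n * (Gmat X A n)ᵀ * A n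
      = Gmat X A n * (Gmat X A n)ᵀ * (A n * (A n)ᵀ) * A n := by
        rw [Matrix.mul_assoc _ (A n * (A n)ᵀ), Matrix.mul_assoc (A n), hA n, Matrix.mul_one]
    _ = A n * (A n)ᵀ * (Gmat X A n * (Gmat X A n)ᵀ) * A n := by rw [hcomm.eq]
    _ = A n * (A n)ᵀ * (Gmat X A n * (Gmat X A n)ᵀ * A n) := Matrix.mul_assoc _ _ _

variable {A : ℕ → ∀ n, Matrix (Fin (I n)) (Fin (r n)) ℝ}
  {Abar : ∀ n, Matrix (Fin (I n)) (Fin (r n)) ℝ}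

lemma IsHOOI.isBlockAscent (h : IsHOOI X A) :
    IsBlockAscent (tensorForm X) r fun k n => A k n * (A k n)ᵀ where
  mem k n := ⟨A k n, h.1 k n, rfl⟩
  isMaxOn k n := by
    have hsweep : sweep (fun n => A k n * (A k n)ᵀ) (fun n => A (k + 1) n * (A (k + 1) n)ᵀ) n =
        fun m => hyb (A k) (A (k + 1)) n m * (hyb (A k) (A (k + 1)) n m)ᵀ := by
      ext1 m
      simp only [sweep, hyb, Fin.lt_def]
      split_ifs <;> rfl
    rw [hsweep]
    exact (isMaxOn_tensorForm_iff X _ n _).mpr (h.2 k n)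

lemma IsLimitPt.mapClusterPt (h : IsLimitPt A Abar) :
    MapClusterPt (fun n => Abar n * (Abar n)ᵀ) atTop fun k n => A k n * (A k n)ᵀ := by
  obtain ⟨φ, hφ, hlim⟩ := h
  refine .of_comp hφ.tendsto_atTop
    (Tendsto.mapClusterPt (tendsto_pi_nhds.mpr fun n => ?_))
  have hcont : Continuous fun M : Matrix (Fin (I n)) (Fin (r n)) ℝ => M * Mᵀ := by fun_prop
  exact (hcont.tendsto (Abar n)).comp (tendsto_fro_sub_iff.mp (hlim n))

lemma IsLimitPt.isNondegenerateLimitPt (h : IsLimitPt A Abar) (hfeas : TFeas Abar)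
    (hr : ∀ n, r n ≤ I n) (hnd : NonDeg X Abar) :
    IsNondegenerateLimitPt (tensorForm X) r (fun k n => A k n * (A k n)ᵀ)
      fun n => Abar n * (Abar n)ᵀ where
  mapClusterPt := h.mapClusterPt
  mem n := ⟨Abar n, hfeas n, rfl⟩
  exists_isSpectralGap n := by
    rw [partialGradient_tensorForm]
    exact exists_isSpectralGap_of_sval_lt (hr n) (hnd n)

end Tucker

/-- If a HOOI sequence has a block-nondegenerate limit point `Ā`,
then `Ā` is a critical point and a block-wise maximizer, and
`Aₙ^k (Aₙ^k)ᵀ → Āₙ Āₙᵀ` for every `n`. -/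
theorem stmt15 {N : ℕ} {I r : Fin N → ℕ} (hr : ∀ n, r n ≤ I n)
    (X : ((n : Fin N) → Fin (I n)) → ℝ)
    (A : ℕ → (n : Fin N) → Matrix (Fin (I n)) (Fin (r n)) ℝ)
    (hA : IsHOOI X A)
    (Abar : (n : Fin N) → Matrix (Fin (I n)) (Fin (r n)) ℝ)
    (hfeas : TFeas Abar) (hlim : IsLimitPt A Abar) (hnd : NonDeg X Abar) :
    Critical X Abar ∧ BlockMax X Abar ∧
    ∀ n, Filter.Tendsto (fun k => fro (A k n * (A k n)ᵀ - Abar n * (Abar n)ᵀ))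
      Filter.atTop (nhds 0) := by
  have hascent := hA.isBlockAscent
  have hB := hlim.isNondegenerateLimitPt hfeas hr hnd
  have hmax : BlockMax X Abar := fun n =>
    (isMaxOn_tensorForm_iff X Abar n (Abar n)).mp (hascent.isMaxOn_of_isNondegenerateLimitPt hB n)
  have hconv := hascent.tendsto_of_isNondegenerateLimitPt hB (tensorForm_transpose X)
  exact ⟨hmax.critical hfeas, hmax, fun n => tendsto_fro_sub_iff.mpr (hconv.apply_nhds n)⟩
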